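/- arXiv:2411.01983 — 3 statements merged into one kernel-verified Lean document; each statement's English description precedes it below -/
import Mathlib

section
/- Let ρ > 0 and C_ρ = 1 + 1/√ρ. There exists a constant K > 0, depending only on ρ and not on λ, such that for every λ > 0 the map e_λ(h) := 1 − λ·exp(h), defined for h in the Filipović space H_ρ with h(0) = 0, takes values in H_ρ and satisfies: for every r ≥ 0 and all h, k ∈ H_ρ with h(0) = k(0) = 0, ‖h‖_ρ ≤ r and ‖k‖_ρ ≤ r, one has ‖e_λ(h) − e_λ(k)‖_ρ ≤ K·λ·(1+r)·e^{C_ρ r}·‖h − k‖_ρ; and for every h ∈ H_ρ with h(0) = 0 and ‖h‖_ρ ≤ r, one has ‖e_λ(h)‖_ρ ≤ 1 + λ + λ·r·e^{C_ρ r}. -/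
open MeasureTheory Filter

/-- `h : [0,∞) → ℝ` belongs to the Filipović space `H_ρ` with derivative `g`:
`g` is (a.e.) measurable on `[0,∞)`, `h x = h 0 + ∫_0^x g(t) dt` for all `x ≥ 0`, and
`∫_0^∞ g(t)² e^{ρ t} dt < ∞`. -/
def MemFil (ρ : ℝ) (h g : ℝ → ℝ) : Prop :=
  AEMeasurable g (volume.restrict (Set.Ici (0:ℝ))) ∧
  (∀ x : ℝ, 0 ≤ x → h x = h 0 + ∫ t in (0:ℝ)..x, g t) ∧
  IntegrableOn (fun t => (g t) ^ 2 * Real.exp (ρ * t)) (Set.Ici (0:ℝ))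

/-- The Filipović norm `‖h‖_ρ = (h(0)² + ∫_0^∞ g(t)² e^{ρ t} dt)^{1/2}`. -/
noncomputable def filNorm (ρ : ℝ) (h g : ℝ → ℝ) : ℝ :=
  Real.sqrt ((h 0) ^ 2 + ∫ t in Set.Ici (0:ℝ), (g t) ^ 2 * Real.exp (ρ * t))

lemma fil_exp_lip {a b B : ℝ} (ha : a ≤ B) (hb : b ≤ B) :
    |Real.exp a - Real.exp b| ≤ Real.exp B * |a - b| := by
  wlog hab : a ≤ b generalizing a b
  · rw [abs_sub_comm, abs_sub_comm a b]
    exact this hb ha (le_of_not_ge hab)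
  have h1 : Real.exp a ≤ Real.exp b := Real.exp_le_exp.2 hab
  have h2 : Real.exp a = Real.exp b * Real.exp (a - b) := by
    rw [← Real.exp_add]; congr 1; ring
  have h3 := Real.add_one_le_exp (a - b)
  have h4 : Real.exp b ≤ Real.exp B := Real.exp_le_exp.2 hb
  rw [abs_of_nonpos (by linarith), abs_of_nonpos (by linarith)]
  have h5 := Real.exp_pos b
  nlinarith

lemma fil_amgm {ρ c : ℝ} (hc : 0 < c) (y t : ℝ) :
    |y| ≤ (c / 2) * (y ^ 2 * Real.exp (ρ * t)) + (1 / (2 * c)) * Real.exp (-ρ * t) := by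
  have h1 : Real.exp (ρ * t) = Real.exp (ρ * t / 2) ^ 2 := by
    rw [← Real.exp_nat_mul]; congr 1; push_cast; ring
  have h2 : Real.exp (-ρ * t) = (Real.exp (ρ * t / 2))⁻¹ ^ 2 := by
    rw [← Real.exp_neg, ← Real.exp_nat_mul]; congr 1; push_cast; ring
  rw [h1, h2, ← sq_abs y]
  set e := Real.exp (ρ * t / 2) with he
  have hep : 0 < e := Real.exp_pos _
  have h3 : (c / 2) * (|y| ^ 2 * e ^ 2) + (1 / (2 * c)) * e⁻¹ ^ 2 - |y|
      = (c * |y| * e - e⁻¹) ^ 2 / (2 * c) := by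
    field_simp
    ring
  have h4 : 0 ≤ (c * |y| * e - e⁻¹) ^ 2 / (2 * c) := by positivity
  linarith

lemma fil_integrable {ρ : ℝ} (hρ : 0 < ρ) {g : ℝ → ℝ}
    (hm : AEMeasurable g (volume.restrict (Set.Ici (0:ℝ))))
    (hi : IntegrableOn (fun t => (g t) ^ 2 * Real.exp (ρ * t)) (Set.Ici (0:ℝ))) :
    IntegrableOn g (Set.Ici 0) := by
  have he : IntegrableOn (fun t => Real.exp (-ρ * t)) (Set.Ici (0:ℝ)) :=
    (integrableOn_Ici_iff_integrableOn_Ioi (by simp)).2 (exp_neg_integrableOn_Ioi 0 hρ)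
  refine Integrable.mono' ((hi.const_mul (1 / 2)).add (he.const_mul (1 / (2 * 1))))
    hm.aestronglyMeasurable ?_
  filter_upwards with t
  exact fil_amgm one_pos (g t) t

lemma fil_int_bound {ρ : ℝ} (hρ : 0 < ρ) {g : ℝ → ℝ}
    (hm : AEMeasurable g (volume.restrict (Set.Ici (0:ℝ))))
    (hi : IntegrableOn (fun t => (g t) ^ 2 * Real.exp (ρ * t)) (Set.Ici (0:ℝ))) :
    ∫ t in Set.Ici (0:ℝ), |g t| ≤
      Real.sqrt (∫ t in Set.Ici (0:ℝ), (g t) ^ 2 * Real.exp (ρ * t)) / Real.sqrt ρ := by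
  have he : IntegrableOn (fun t => Real.exp (-ρ * t)) (Set.Ici (0:ℝ)) :=
    (integrableOn_Ici_iff_integrableOn_Ioi (by simp)).2 (exp_neg_integrableOn_Ioi 0 hρ)
  have hev : ∫ t in Set.Ici (0:ℝ), Real.exp (-ρ * t) = 1 / ρ := by
    rw [integral_Ici_eq_integral_Ioi, integral_exp_mul_Ioi (by linarith)]
    simp
  set I := ∫ t in Set.Ici (0:ℝ), (g t) ^ 2 * Real.exp (ρ * t) with hI
  have hI0 : 0 ≤ I := integral_nonneg fun t => by positivity
  have hs : 0 < Real.sqrt ρ := Real.sqrt_pos.2 hρ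
  have key : ∀ c : ℝ, 0 < c → ∫ t in Set.Ici (0:ℝ), |g t| ≤ c / 2 * I + 1 / (2 * c) * (1 / ρ) := by
    intro c hc
    rw [hI, ← hev, ← integral_const_mul, ← integral_const_mul, ← integral_add]
    · refine integral_mono (fil_integrable hρ hm hi).abs
        ((hi.const_mul _).add (he.const_mul _)) ?_
      intro t
      exact fil_amgm hc (g t) t
    · exact hi.const_mul _
    · exact he.const_mul _
  rw [le_div_iff₀ hs]
  refine le_of_forall_pos_le_add fun ε hε => ?_
  set N := Real.sqrt I + ε with hN
  have hN0 : 0 < N := by positivity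
  have hIN : I ≤ N ^ 2 := by
    have h1 := Real.sq_sqrt hI0
    have h2 := Real.sqrt_nonneg I
    nlinarith
  have hk := key (1 / (Real.sqrt ρ * N)) (by positivity)
  have h1 : 1 / (Real.sqrt ρ * N) / 2 * I ≤ 1 / (Real.sqrt ρ * N) / 2 * N ^ 2 := by gcongr
  have h2 : 1 / (Real.sqrt ρ * N) / 2 * N ^ 2 + 1 / (2 * (1 / (Real.sqrt ρ * N))) * (1 / ρ)
      = N / Real.sqrt ρ := by
    have h3 : ρ = Real.sqrt ρ ^ 2 := (Real.sq_sqrt hρ.le).symm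
    generalize Real.sqrt ρ = s at *
    subst h3
    field_simp
    ring
  rw [← le_div_iff₀ hs]
  linarith

lemma fil_sup {ρ : ℝ} (hρ : 0 < ρ) {h g : ℝ → ℝ} (hm : MemFil ρ h g) (h0 : h 0 = 0)
    {x : ℝ} (hx : 0 ≤ x) : |h x| ≤ filNorm ρ h g / Real.sqrt ρ := by
  obtain ⟨hm1, hm2, hm3⟩ := hm
  have hb := fil_int_bound hρ hm1 hm3
  have hint := fil_integrable hρ hm1 hm3
  unfold filNorm
  rw [hm2 x hx, h0, zero_pow two_ne_zero, zero_add, zero_add]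
  refine le_trans ?_ hb
  rw [intervalIntegral.integral_of_le hx]
  refine (abs_integral_le_integral_abs).trans ?_
  refine setIntegral_mono_set hint.abs ?_ ?_
  · filter_upwards with t using abs_nonneg _
  · exact (Set.Ioc_subset_Ioi_self.trans Set.Ioi_subset_Ici_self).eventuallyLE

lemma fil_sub {ρ : ℝ} (hρ : 0 < ρ) {h k gh gk : ℝ → ℝ} (hh : MemFil ρ h gh)
    (hk : MemFil ρ k gk) : MemFil ρ (fun x => h x - k x) (fun t => gh t - gk t) := by
  obtain ⟨a1, a2, a3⟩ := hh
  obtain ⟨b1, b2, b3⟩ := hk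
  have ia := fil_integrable hρ a1 a3
  have ib := fil_integrable hρ b1 b3
  refine ⟨a1.sub b1, ?_, ?_⟩
  · intro x hx
    have hsub : Set.Ioc 0 x ⊆ Set.Ici (0:ℝ) :=
      Set.Ioc_subset_Ioi_self.trans Set.Ioi_subset_Ici_self
    rw [intervalIntegral.integral_sub
      ((intervalIntegrable_iff_integrableOn_Ioc_of_le hx).2 (ia.mono_set hsub))
      ((intervalIntegrable_iff_integrableOn_Ioc_of_le hx).2 (ib.mono_set hsub))]
    simp only
    rw [a2 x hx, b2 x hx]
    ring
  · refine Integrable.mono' ((a3.const_mul 2).add (b3.const_mul 2)) ?_ ?_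
    · exact (((a1.sub b1).pow_const 2).mul (by fun_prop)).aestronglyMeasurable
    · filter_upwards with t
      rw [Real.norm_of_nonneg (by positivity)]
      have := Real.exp_pos (ρ * t)
      simp only [Pi.add_apply]
      nlinarith [mul_nonneg (sq_nonneg (gh t + gk t)) this.le]

/-- Chain rule for the exponential. -/
lemma fil_chain {g h : ℝ → ℝ} (hint : IntegrableOn g (Set.Ici (0:ℝ)))
    (hh : ∀ x : ℝ, 0 ≤ x → h x = h 0 + ∫ t in (0:ℝ)..x, g t) :
    ContinuousOn h (Set.Ici 0) ∧
    ∀ x : ℝ, 0 ≤ x → Real.exp (h x) = Real.exp (h 0) + ∫ t in (0:ℝ)..x, Real.exp (h t) * g t := by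
  set G : ℝ → ℝ := (Set.Ici (0:ℝ)).indicator g with hG
  have hGi : Integrable G := (integrable_indicator_iff measurableSet_Ici).2 hint
  set H : ℝ → ℝ := fun x => h 0 + ∫ t in (0:ℝ)..x, G t with hH
  have hGI : ∀ a b, IntervalIntegrable G volume a b := fun a b => hGi.intervalIntegrable
  have hHh : ∀ x, 0 ≤ x → h x = H x := by
    intro x hx
    rw [hh x hx, hH]
    simp only
    congr 1
    refine intervalIntegral.integral_congr fun t ht => ?_
    rw [Set.uIcc_of_le hx] at ht
    simp [hG, Set.indicator, ht.1]
  have hHc : Continuous H := continuous_const.add (intervalIntegral.continuous_primitive hGI 0)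
  refine ⟨hHc.continuousOn.congr hHh, fun x hx => ?_⟩
  have hac : AbsolutelyContinuousOnInterval (fun y => ∫ t in (0:ℝ)..y, G t) 0 x :=
    (hGI 0 x).absolutelyContinuousOnInterval_intervalIntegral (by simp)
  obtain ⟨B, hB⟩ := (isCompact_uIcc (a := (0:ℝ)) (b := x)).exists_bound_of_continuousOn
    hHc.continuousOn
  have hace : AbsolutelyContinuousOnInterval (fun y => Real.exp (H y)) 0 x := by
    rw [absolutelyContinuousOnInterval_iff] at hac ⊢
    intro ε hε
    obtain ⟨δ, hδ, hd⟩ := hac (ε / Real.exp B) (by positivity)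
    refine ⟨δ, hδ, fun E hE hEd => ?_⟩
    have h1 := hd E hE hEd
    rw [lt_div_iff₀ (Real.exp_pos B), mul_comm, Finset.mul_sum] at h1
    refine lt_of_le_of_lt (Finset.sum_le_sum fun i hi => ?_) h1
    have hmem := hE.1 i hi
    have e1 := (le_abs_self _).trans (hB _ hmem.1)
    have e2 := (le_abs_self _).trans (hB _ hmem.2)
    refine (fil_exp_lip e1 e2).trans (le_of_eq ?_)
    simp [hH, Real.dist_eq]
  have hftc := hace.integral_deriv_eq_sub
  have hder := LocallyIntegrable.ae_hasDerivAt_integral hGi.locallyIntegrable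
  have heq : ∫ t in (0:ℝ)..x, deriv (fun y => Real.exp (H y)) t
      = ∫ t in (0:ℝ)..x, Real.exp (h t) * g t := by
    refine intervalIntegral.integral_congr_ae ?_
    filter_upwards [hder] with t ht htx
    rw [Set.uIoc_of_le hx] at htx
    have hd : HasDerivAt H (G t) t := (ht 0).const_add (h 0)
    rw [hd.exp.deriv, ← hHh t htx.1.le]
    simp [hG, Set.indicator, htx.1.le]
  rw [← heq, hftc, hHh x hx, hHh 0 le_rfl]
  ring

lemma fil_mem {ρ : ℝ} (hρ : 0 < ρ) (lam : ℝ) {h g : ℝ → ℝ} (hm : MemFil ρ h g) (h0 : h 0 = 0) :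
    MemFil ρ (fun x => 1 - lam * Real.exp (h x)) (fun t => -(lam * Real.exp (h t) * g t)) := by
  have hsup := fun x hx => fil_sup hρ hm h0 (x := x) hx
  obtain ⟨m1, m2, m3⟩ := hm
  have hint := fil_integrable hρ m1 m3
  obtain ⟨hc, hch⟩ := fil_chain hint m2
  have hme : AEMeasurable h (volume.restrict (Set.Ici (0:ℝ))) := hc.aemeasurable measurableSet_Ici
  have hmeas : AEMeasurable (fun t => -(lam * Real.exp (h t) * g t))
      (volume.restrict (Set.Ici (0:ℝ))) :=
    (((Real.measurable_exp.comp_aemeasurable hme).const_mul lam).mul m1).neg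
  refine ⟨hmeas, ?_, ?_⟩
  · intro x hx
    simp only [mul_assoc, intervalIntegral.integral_neg, intervalIntegral.integral_const_mul]
    rw [hch x hx]
    ring
  · set M := filNorm ρ h g / Real.sqrt ρ
    refine Integrable.mono' (m3.const_mul ((lam * Real.exp M) ^ 2)) ?_ ?_
    · exact ((hmeas.pow_const 2).mul (by fun_prop)).aestronglyMeasurable
    · filter_upwards [ae_restrict_mem measurableSet_Ici] with t ht
      rw [Real.norm_of_nonneg (by positivity)]
      have hb : Real.exp (h t) ≤ Real.exp M := Real.exp_le_exp.2 ((le_abs_self _).trans (hsup t ht))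
      calc (-(lam * Real.exp (h t) * g t)) ^ 2 * Real.exp (ρ * t)
          = lam ^ 2 * Real.exp (h t) ^ 2 * (g t ^ 2 * Real.exp (ρ * t)) := by ring
        _ ≤ lam ^ 2 * Real.exp M ^ 2 * (g t ^ 2 * Real.exp (ρ * t)) := by gcongr
        _ = _ := by ring

lemma fil_int_le {ρ : ℝ} {h g : ℝ → ℝ} {r : ℝ} (hn : filNorm ρ h g ≤ r) (h0 : h 0 = 0) :
    ∫ t in Set.Ici (0:ℝ), (g t) ^ 2 * Real.exp (ρ * t) ≤ r ^ 2 := by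
  unfold filNorm at hn
  rw [h0, zero_pow two_ne_zero, zero_add] at hn
  exact (Real.sqrt_le_left ((Real.sqrt_nonneg _).trans hn)).1 hn

/-- there exists `K > 0`, depending only on `ρ` and not on `λ`, such that
for every `λ > 0` the map `e_λ(h) = 1 − λ exp(h)`, defined for `h ∈ H¹_ρ` (i.e. `h(0)=0`),
takes values in `H_ρ`, is locally Lipschitz with Lipschitz function
`K λ (1+r) e^{C_ρ r}`, and satisfies `‖e_λ(h)‖_ρ ≤ 1 + λ + λ r e^{C_ρ r}` on the ball of
radius `r`, where `C_ρ = 1 + 1/√ρ`. -/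
theorem filipovic_e_lambda (ρ : ℝ) (hρ : 0 < ρ) :
    ∃ K : ℝ, 0 < K ∧
      ∀ lam : ℝ, 0 < lam →
        (∀ h g : ℝ → ℝ, MemFil ρ h g → h 0 = 0 →
          MemFil ρ (fun x => 1 - lam * Real.exp (h x))
            (fun t => -(lam * Real.exp (h t) * g t))) ∧
        ∀ r : ℝ, 0 ≤ r →
          (∀ h k gh gk : ℝ → ℝ, MemFil ρ h gh → MemFil ρ k gk →
            h 0 = 0 → k 0 = 0 → filNorm ρ h gh ≤ r → filNorm ρ k gk ≤ r →
            filNorm ρ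
              (fun x => (1 - lam * Real.exp (h x)) - (1 - lam * Real.exp (k x)))
              (fun t => -(lam * Real.exp (h t) * gh t) - -(lam * Real.exp (k t) * gk t))
              ≤ K * lam * (1 + r) * Real.exp ((1 + 1 / Real.sqrt ρ) * r)
                * filNorm ρ (fun x => h x - k x) (fun t => gh t - gk t)) ∧
          (∀ h g : ℝ → ℝ, MemFil ρ h g → h 0 = 0 → filNorm ρ h g ≤ r →
            filNorm ρ (fun x => 1 - lam * Real.exp (h x))
              (fun t => -(lam * Real.exp (h t) * g t))
              ≤ 1 + lam + lam * r * Real.exp ((1 + 1 / Real.sqrt ρ) * r)) := by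
  have hs : 0 < Real.sqrt ρ := Real.sqrt_pos.2 hρ
  refine ⟨2 * (1 + 1 / ρ), by positivity, fun lam hlam => ⟨fun h g hm h0 => fil_mem hρ lam hm h0,
    fun r hr => ⟨?_, ?_⟩⟩⟩
  · intro h k gh gk mh mk h0 k0 nh nk
    have md := fil_sub hρ mh mk
    have hd0 : (fun x => h x - k x) 0 = 0 := by simp [h0, k0]
    set D := filNorm ρ (fun x => h x - k x) (fun t => gh t - gk t) with hD
    have hD0 : 0 ≤ D := Real.sqrt_nonneg _
    have iD := fil_int_le (le_of_eq hD.symm) hd0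
    have ik := fil_int_le nk k0
    set E := Real.exp ((1 + 1 / Real.sqrt ρ) * r) with hE
    have hE0 : 0 < E := Real.exp_pos _
    have hB : r / Real.sqrt ρ ≤ (1 + 1 / Real.sqrt ρ) * r := by
      have : (1 + 1 / Real.sqrt ρ) * r = r + r / Real.sqrt ρ := by ring
      linarith
    have bh : ∀ t, 0 ≤ t → h t ≤ (1 + 1 / Real.sqrt ρ) * r := fun t ht =>
      ((le_abs_self _).trans (fil_sup hρ mh h0 ht)).trans (le_trans (by gcongr) hB)
    have bk : ∀ t, 0 ≤ t → k t ≤ (1 + 1 / Real.sqrt ρ) * r := fun t ht =>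
      ((le_abs_self _).trans (fil_sup hρ mk k0 ht)).trans (le_trans (by gcongr) hB)
    have bd : ∀ t, 0 ≤ t → |h t - k t| ≤ D / Real.sqrt ρ := fun t ht => fil_sup hρ md hd0 ht
    have hpt : ∀ t ∈ Set.Ici (0:ℝ),
        (-(lam * Real.exp (h t) * gh t) - -(lam * Real.exp (k t) * gk t)) ^ 2 * Real.exp (ρ * t)
        ≤ (2 * lam ^ 2 * E ^ 2) * ((gh t - gk t) ^ 2 * Real.exp (ρ * t))
          + (2 * lam ^ 2 * E ^ 2 * (D ^ 2 / ρ)) * (gk t ^ 2 * Real.exp (ρ * t)) := by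
      intro t ht
      have hx := Real.exp_pos (ρ * t)
      have e1 : Real.exp (h t) ≤ E := Real.exp_le_exp.2 (bh t ht)
      have e2 : |Real.exp (h t) - Real.exp (k t)| ≤ E * (D / Real.sqrt ρ) :=
        (fil_exp_lip (bh t ht) (bk t ht)).trans (by gcongr; exact bd t ht)
      have e1' : Real.exp (h t) ^ 2 ≤ E ^ 2 := by gcongr
      have e2' : (Real.exp (h t) - Real.exp (k t)) ^ 2 ≤ E ^ 2 * (D ^ 2 / ρ) := by
        rw [← sq_abs]
        calc _ ≤ (E * (D / Real.sqrt ρ)) ^ 2 := by gcongr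
          _ = _ := by rw [mul_pow, div_pow, Real.sq_sqrt hρ.le]
      calc (-(lam * Real.exp (h t) * gh t) - -(lam * Real.exp (k t) * gk t)) ^ 2 * Real.exp (ρ * t)
          = lam ^ 2 * (Real.exp (h t) * (gh t - gk t)
              + (Real.exp (h t) - Real.exp (k t)) * gk t) ^ 2 * Real.exp (ρ * t) := by ring
        _ ≤ lam ^ 2 * (2 * ((Real.exp (h t) * (gh t - gk t)) ^ 2
              + ((Real.exp (h t) - Real.exp (k t)) * gk t) ^ 2)) * Real.exp (ρ * t) := by
            gcongr; exact add_sq_le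
        _ = lam ^ 2 * (2 * (Real.exp (h t) ^ 2 * (gh t - gk t) ^ 2
              + (Real.exp (h t) - Real.exp (k t)) ^ 2 * gk t ^ 2)) * Real.exp (ρ * t) := by ring
        _ ≤ lam ^ 2 * (2 * (E ^ 2 * (gh t - gk t) ^ 2
              + (E ^ 2 * (D ^ 2 / ρ)) * gk t ^ 2)) * Real.exp (ρ * t) := by gcongr
        _ = _ := by ring
    have iA : ∫ t in Set.Ici (0:ℝ),
        (-(lam * Real.exp (h t) * gh t) - -(lam * Real.exp (k t) * gk t)) ^ 2 * Real.exp (ρ * t)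
        ≤ (2 * lam ^ 2 * E ^ 2) * D ^ 2 + (2 * lam ^ 2 * E ^ 2 * (D ^ 2 / ρ)) * r ^ 2 := by
      refine (setIntegral_mono_on (fil_sub hρ (fil_mem hρ lam mh h0) (fil_mem hρ lam mk k0)).2.2
        ((md.2.2.const_mul _).add (mk.2.2.const_mul _)) measurableSet_Ici hpt).trans ?_
      rw [integral_add' (md.2.2.const_mul _) (mk.2.2.const_mul _), integral_const_mul,
        integral_const_mul]
      gcongr
    unfold filNorm
    simp only [h0, k0, sub_self]
    refine Real.sqrt_le_iff.2 ⟨by positivity, ?_⟩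
    rw [zero_pow two_ne_zero, zero_add]
    refine iA.trans ?_
    have hq : 0 < 1 / ρ := by positivity
    have hfin : 2 * (1 + 1 / ρ * r ^ 2) ≤ (2 * (1 + 1 / ρ) * (1 + r)) ^ 2 := by
      generalize 1 / ρ = q at hq
      have : (2 * (1 + q) * (1 + r)) ^ 2 - 2 * (1 + q * r ^ 2)
        = 2 + 4 * q ^ 2 + 8 * q + 8 * r * (1 + q) ^ 2 + r ^ 2 * (4 + 6 * q + 4 * q ^ 2) := by ring
      have : 0 ≤ 2 + 4 * q ^ 2 + 8 * q + 8 * r * (1 + q) ^ 2 + r ^ 2 * (4 + 6 * q + 4 * q ^ 2) := by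
        positivity
      linarith
    calc (2 * lam ^ 2 * E ^ 2) * D ^ 2 + (2 * lam ^ 2 * E ^ 2 * (D ^ 2 / ρ)) * r ^ 2
        = (lam * E * D) ^ 2 * (2 * (1 + 1 / ρ * r ^ 2)) := by ring
      _ ≤ (lam * E * D) ^ 2 * (2 * (1 + 1 / ρ) * (1 + r)) ^ 2 := by gcongr
      _ = _ := by ring
  · intro h g hm h0 hn
    have ig := fil_int_le hn h0
    set E := Real.exp ((1 + 1 / Real.sqrt ρ) * r) with hE
    have hE0 : 0 < E := Real.exp_pos _
    have hB : r / Real.sqrt ρ ≤ (1 + 1 / Real.sqrt ρ) * r := by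
      have : (1 + 1 / Real.sqrt ρ) * r = r + r / Real.sqrt ρ := by ring
      linarith
    have bh : ∀ t, 0 ≤ t → h t ≤ (1 + 1 / Real.sqrt ρ) * r := fun t ht =>
      ((le_abs_self _).trans (fil_sup hρ hm h0 ht)).trans (le_trans (by gcongr) hB)
    have iA : ∫ t in Set.Ici (0:ℝ), (-(lam * Real.exp (h t) * g t)) ^ 2 * Real.exp (ρ * t)
        ≤ (lam ^ 2 * E ^ 2) * r ^ 2 := by
      refine (setIntegral_mono_on (fil_mem hρ lam hm h0).2.2
        (hm.2.2.const_mul (lam ^ 2 * E ^ 2)) measurableSet_Ici ?_).trans ?_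
      · intro t ht
        have e1 : Real.exp (h t) ≤ E := Real.exp_le_exp.2 (bh t ht)
        calc (-(lam * Real.exp (h t) * g t)) ^ 2 * Real.exp (ρ * t)
            = lam ^ 2 * Real.exp (h t) ^ 2 * (g t ^ 2 * Real.exp (ρ * t)) := by ring
          _ ≤ lam ^ 2 * E ^ 2 * (g t ^ 2 * Real.exp (ρ * t)) := by gcongr
      · rw [integral_const_mul]
        gcongr
    unfold filNorm
    simp only [h0, Real.exp_zero, mul_one]
    refine Real.sqrt_le_iff.2 ⟨by positivity, ?_⟩
    have hp : 0 ≤ lam * r * E := by positivity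
    nlinarith [mul_nonneg hp hlam.le]
end

section
/- Let ρ > 0 and let X be a normed space. Suppose β assigns to each x ∈ X a function β(x) in the Filipović space H_ρ (with a derivative assignment x ↦ δ(x)) such that lim_{ξ→∞} β(x)(ξ) = 0 for every x. Assume β is locally Lipschitz in the ball sense as a map into (H_ρ, ‖·‖_ρ), i.e., there is an increasing L : [0,∞) → [0,∞) with ‖β(x₁) − β(x₂)‖_ρ ≤ L(r)·‖x₁ − x₂‖_X whenever ‖x₁‖_X ≤ r and ‖x₂‖_X ≤ r, and that there is a constant K > 0 with ‖β(x)‖_ρ ≤ K·√(1 + ‖x‖_X) for all x ∈ X. Then the map α(x) := β(x)·𝓘β(x), where (𝓘β(x))(ξ) = ∫_0^ξ β(x)(t) dt, satisfies: α(x) ∈ H_ρ with lim_{ξ→∞} α(x)(ξ) = 0 for every x; α is locally Lipschitz in the ball sense as a map into (H_ρ, ‖·‖_ρ); and there exists a constant C > 0 with ‖α(x)‖_ρ ≤ C·(1 + ‖x‖_X) for all x ∈ X. -/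
open MeasureTheory Filter

/-- The space `H⁰_ρ`. -/
def MemFilZero (ρ : ℝ) (h g : ℝ → ℝ) : Prop :=
  MemFil ρ h g ∧ Tendsto h atTop (nhds 0)

lemma exp_integrableOn_Ici {c : ℝ} (hc : 0 < c) (x : ℝ) :
    IntegrableOn (fun t => Real.exp (-c * t)) (Set.Ici x) := by
  rw [integrableOn_Ici_iff_integrableOn_Ioi]
  exact integrableOn_exp_mul_Ioi (by linarith) x

lemma MemFil.integrableOn {ρ : ℝ} (hρ : 0 < ρ) {h g : ℝ → ℝ} (H : MemFil ρ h g) :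
    IntegrableOn g (Set.Ici 0) := by
  obtain ⟨h1, -, h3⟩ := H
  refine Integrable.mono' (h3.add (exp_integrableOn_Ici hρ 0)) h1.aestronglyMeasurable ?_
  refine Eventually.of_forall fun t => ?_
  have e1 : Real.exp (ρ * t) * Real.exp (-ρ * t) = 1 := by
    rw [← Real.exp_add]; simp
  have p1 := Real.exp_pos (ρ * t)
  have p2 := Real.exp_pos (-ρ * t)
  simp only [Real.norm_eq_abs, Pi.add_apply]
  rw [← sq_abs (g t)]
  have : 0 ≤ Real.exp (ρ * t) * (|g t| - Real.exp (-ρ * t)) ^ 2 := by positivity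
  have e2 : Real.exp (ρ * t) * (|g t| - Real.exp (-ρ * t)) ^ 2
    = |g t| ^ 2 * Real.exp (ρ * t) - 2 * |g t| * (Real.exp (ρ * t) * Real.exp (-ρ * t))
      + (Real.exp (ρ * t) * Real.exp (-ρ * t)) * Real.exp (-ρ * t) := by ring
  rw [e2, e1] at this
  have := abs_nonneg (g t)
  linarith

lemma MemFil.ii {ρ : ℝ} (hρ : 0 < ρ) {h g : ℝ → ℝ} (H : MemFil ρ h g) {x : ℝ} (hx : 0 ≤ x) :
    IntervalIntegrable g volume 0 x := by
  rw [intervalIntegrable_iff_integrableOn_Icc_of_le hx]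
  exact (H.integrableOn hρ).mono_set Set.Icc_subset_Ici_self

lemma contOn_primitive {g : ℝ → ℝ} (H : ∀ x, 0 ≤ x → IntervalIntegrable g volume 0 x) :
    ContinuousOn (fun x => ∫ t in (0:ℝ)..x, g t) (Set.Ici 0) := by
  intro x hx
  have hx : 0 ≤ x := hx
  have h1 := intervalIntegral.continuousOn_primitive_interval' (H (x + 1) (by linarith))
    (Set.left_mem_uIcc)
  rw [Set.uIcc_of_le (by linarith)] at h1
  refine (h1 x ⟨hx, by linarith⟩).mono_of_mem_nhdsWithin ?_
  rw [← Set.Ici_inter_Iic]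
  exact inter_mem_nhdsWithin _ (Iic_mem_nhds (by linarith))

lemma MemFil.contOn {ρ : ℝ} (hρ : 0 < ρ) {h g : ℝ → ℝ} (H : MemFil ρ h g) :
    ContinuousOn h (Set.Ici 0) := by
  refine ContinuousOn.congr (f := fun x => h 0 + ∫ t in (0:ℝ)..x, g t) ?_ ?_
  · exact continuousOn_const.add (contOn_primitive fun x hx => H.ii hρ hx)
  · intro x hx
    exact H.2.1 x hx

lemma MemFil.ii_self {ρ : ℝ} (hρ : 0 < ρ) {h g : ℝ → ℝ} (H : MemFil ρ h g) {x : ℝ}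
    (hx : 0 ≤ x) : IntervalIntegrable h volume 0 x := by
  apply ContinuousOn.intervalIntegrable
  rw [Set.uIcc_of_le hx]
  exact (H.contOn hρ).mono Set.Icc_subset_Ici_self

lemma filNorm_sq (ρ : ℝ) (h g : ℝ → ℝ) :
    filNorm ρ h g ^ 2 = (h 0) ^ 2 + ∫ t in Set.Ici (0:ℝ), (g t) ^ 2 * Real.exp (ρ * t) := by
  unfold filNorm
  rw [Real.sq_sqrt]
  have : 0 ≤ ∫ t in Set.Ici (0:ℝ), (g t) ^ 2 * Real.exp (ρ * t) :=
    integral_nonneg fun t => by positivity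
  positivity

lemma filNorm_nonneg (ρ : ℝ) (h g : ℝ → ℝ) : 0 ≤ filNorm ρ h g := Real.sqrt_nonneg _

lemma integral_le_filNorm_sq (ρ : ℝ) (h g : ℝ → ℝ) :
    ∫ t in Set.Ici (0:ℝ), (g t) ^ 2 * Real.exp (ρ * t) ≤ filNorm ρ h g ^ 2 := by
  rw [filNorm_sq]; nlinarith [sq_nonneg (h 0)]

lemma MemFilZero.eq_neg {ρ : ℝ} (hρ : 0 < ρ) {h g : ℝ → ℝ} (H : MemFilZero ρ h g) {x : ℝ}
    (hx : 0 ≤ x) : h x = - ∫ t in Set.Ioi x, g t := by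
  have hg := H.1.integrableOn hρ
  have hg0 : IntegrableOn g (Set.Ioi 0) := hg.mono_set Set.Ioi_subset_Ici_self
  have hgx : IntegrableOn g (Set.Ioi x) := hg0.mono_set (Set.Ioi_subset_Ioi hx)
  have t1 := (intervalIntegral_tendsto_integral_Ioi 0 hg0 tendsto_id).const_add (h 0)
  have t2 : Tendsto h atTop (nhds (h 0 + ∫ t in Set.Ioi 0, g t)) := by
    refine t1.congr' ?_
    filter_upwards [eventually_ge_atTop 0] with y hy
    exact (H.1.2.1 y hy).symm
  have e := tendsto_nhds_unique H.2 t2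
  have e2 := intervalIntegral.integral_interval_add_Ioi hg0 hgx
  rw [H.1.2.1 x hx]
  linarith

lemma MemFilZero.sq_bound {ρ : ℝ} (hρ : 0 < ρ) {h g : ℝ → ℝ} (H : MemFilZero ρ h g) {x : ℝ}
    (hx : 0 ≤ x) : ρ * h x ^ 2 ≤ filNorm ρ h g ^ 2 * Real.exp (-ρ * x) := by
  have hg := H.1.integrableOn hρ
  have sub : Set.Ioi x ⊆ Set.Ici 0 := fun y hy => hx.trans (le_of_lt hy)
  have hgx : IntegrableOn g (Set.Ioi x) := hg.mono_set sub
  have hGx := H.1.2.2.mono_set sub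
  have hEx := (exp_integrableOn_Ici hρ x).mono_set Set.Ioi_subset_Ici_self
  have hE : ∫ t in Set.Ioi x, Real.exp (-ρ * t) = Real.exp (-ρ * x) / ρ := by
    rw [integral_exp_mul_Ioi (by linarith)]; field_simp
  have hG : ∫ t in Set.Ioi x, (g t) ^ 2 * Real.exp (ρ * t) ≤ filNorm ρ h g ^ 2 := by
    refine le_trans ?_ (integral_le_filNorm_sq ρ h g)
    exact setIntegral_mono_set H.1.2.2 (Eventually.of_forall fun t => by positivity)
      sub.eventuallyLE
  have key : ∀ s : ℝ, 0 ≤ (∫ t in Set.Ioi x, (g t) ^ 2 * Real.exp (ρ * t)) * (s * s)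
      + (2 * h x) * s + ∫ t in Set.Ioi x, Real.exp (-ρ * t) := by
    intro s
    have : 0 ≤ ∫ t in Set.Ioi x, (((g t) ^ 2 * Real.exp (ρ * t)) * (s * s)
      - g t * (2 * s) + Real.exp (-ρ * t)) := by
      refine integral_nonneg fun t => ?_
      have e1 : Real.exp (ρ * t) * Real.exp (-ρ * t) = 1 := by
        rw [← Real.exp_add]; simp
      have p2 := Real.exp_pos (ρ * t)
      have : 0 ≤ Real.exp (ρ * t) * (g t * s - Real.exp (-ρ * t)) ^ 2 := by positivity
      have e2 : Real.exp (ρ * t) * (g t * s - Real.exp (-ρ * t)) ^ 2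
        = ((g t) ^ 2 * Real.exp (ρ * t)) * (s * s)
          - g t * (2 * s) * (Real.exp (ρ * t) * Real.exp (-ρ * t))
        + (Real.exp (ρ * t) * Real.exp (-ρ * t)) * Real.exp (-ρ * t) := by ring
      rw [e2, e1] at this
      simp only [Pi.zero_apply]
      linarith
    have hd : Integrable (fun t => ((g t) ^ 2 * Real.exp (ρ * t)) * (s * s) - g t * (2 * s))
        (volume.restrict (Set.Ioi x)) := (hGx.mul_const (s * s)).sub (hgx.mul_const (2 * s))
    rw [integral_add hd hEx, integral_sub (hGx.mul_const _) (hgx.mul_const _), integral_mul_const,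
      integral_mul_const] at this
    rw [H.eq_neg hρ hx]
    linarith
  have d := discrim_le_zero key
  unfold discrim at d
  rw [hE] at d
  have p := Real.exp_pos (-ρ * x)
  have d2 : h x ^ 2 ≤ (∫ t in Set.Ioi x, (g t) ^ 2 * Real.exp (ρ * t)) *
    (Real.exp (-ρ * x) / ρ) := by linarith
  calc ρ * h x ^ 2 ≤ ρ * ((∫ t in Set.Ioi x, (g t) ^ 2 * Real.exp (ρ * t)) *
        (Real.exp (-ρ * x) / ρ)) := by gcongr
    _ = (∫ t in Set.Ioi x, (g t) ^ 2 * Real.exp (ρ * t)) * Real.exp (-ρ * x) := by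
      field_simp
    _ ≤ _ := by gcongr

lemma MemFilZero.abs_bound {ρ : ℝ} (hρ : 0 < ρ) {h g : ℝ → ℝ} (H : MemFilZero ρ h g) {x : ℝ}
    (hx : 0 ≤ x) : |h x| ≤ filNorm ρ h g / Real.sqrt ρ * Real.exp (-(ρ / 2) * x) := by
  have hN := filNorm_nonneg ρ h g
  apply abs_le_of_sq_le_sq _ (by positivity)
  have := H.sq_bound hρ hx
  rw [mul_pow, div_pow, Real.sq_sqrt hρ.le, ← Real.exp_nat_mul]
  have e : ((2:ℕ):ℝ) * (-(ρ / 2) * x) = -ρ * x := by push_cast; ring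
  rw [e, div_mul_eq_mul_div, le_div_iff₀ hρ]
  linarith

lemma MemFilZero.prim_bound {ρ : ℝ} (hρ : 0 < ρ) {h g : ℝ → ℝ} (H : MemFilZero ρ h g) {x : ℝ}
    (hx : 0 ≤ x) : |∫ t in (0:ℝ)..x, h t| ≤ filNorm ρ h g / Real.sqrt ρ * (2 / ρ) := by
  have hN := filNorm_nonneg ρ h g
  have hi := exp_integrableOn_Ici (half_pos hρ) 0
  have h1 : IntervalIntegrable (fun t => filNorm ρ h g / Real.sqrt ρ * Real.exp (-(ρ / 2) * t))
      volume 0 x := by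
    apply Continuous.intervalIntegrable; fun_prop
  have h2 := intervalIntegral.norm_integral_le_of_norm_le hx (f := h) (μ := volume)
    (Eventually.of_forall fun t ht => H.abs_bound hρ ht.1.le) h1
  refine h2.trans ?_
  rw [intervalIntegral.integral_const_mul]
  gcongr
  rw [intervalIntegral.integral_of_le hx]
  have e : ∫ t in Set.Ioi (0:ℝ), Real.exp (-(ρ / 2) * t) = 2 / ρ := by
    rw [integral_exp_mul_Ioi (by linarith)]; simp
  rw [← e]
  exact setIntegral_mono_set (hi.mono_set Set.Ioi_subset_Ici_self)
    (Eventually.of_forall fun t => (Real.exp_pos _).le)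
    (Set.Ioc_subset_Ioi_self).eventuallyLE

lemma ibp {h g : ℝ → ℝ} {x : ℝ} (hx : 0 ≤ x) (hg : IntervalIntegrable g volume 0 x)
    (hh : IntervalIntegrable h volume 0 x)
    (e : ∀ y, 0 ≤ y → h y = h 0 + ∫ t in (0:ℝ)..y, g t) :
    h x * (∫ t in (0:ℝ)..x, h t) =
      ∫ t in (0:ℝ)..x, (g t * (∫ s in (0:ℝ)..t, h s) + h t * h t) := by
  have a1 := hg.absolutelyContinuousOnInterval_intervalIntegral (c := 0) (by simp)
  have a2 := hh.absolutelyContinuousOnInterval_intervalIntegral (c := 0) (by simp)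
  have a0 : AbsolutelyContinuousOnInterval (fun _ : ℝ => h 0) 0 x :=
    (contDiffOn_const (n := 1)).absolutelyContinuousOnInterval
  have a3 := (a0.add a1).integral_deriv_mul_eq_sub a2
  simp only [Pi.add_apply, intervalIntegral.integral_same, mul_zero, sub_zero] at a3
  rw [← e x hx] at a3
  rw [← a3]
  apply intervalIntegral.integral_congr_ae
  filter_upwards [hg.ae_hasDerivAt_integral, hh.ae_hasDerivAt_integral] with t h1 h2 ht
  have ht' := Set.uIoc_subset_uIcc ht
  have d1 := (h1 ht' 0 (by simp)).const_add (h 0)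
  have d2 := h2 ht' 0 (by simp)
  have t0 : 0 ≤ t := by
    rw [Set.uIcc_of_le hx] at ht'; exact ht'.1
  have d1' : deriv ((fun _ : ℝ => h 0) + fun x => ∫ v in (0:ℝ)..x, g v) t = g t := d1.deriv
  rw [d1', d2.deriv, ← e t t0]

lemma bilin {ρ : ℝ} (hρ : 0 < ρ) {h₁ g₁ h₂ g₂ : ℝ → ℝ} (H₁ : MemFilZero ρ h₁ g₁)
    (H₂ : MemFilZero ρ h₂ g₂) :
    AEMeasurable (fun t => g₁ t * (∫ s in (0:ℝ)..t, h₂ s) + h₁ t * h₂ t)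
      (volume.restrict (Set.Ici (0:ℝ))) ∧
    IntegrableOn (fun t => (g₁ t * (∫ s in (0:ℝ)..t, h₂ s) + h₁ t * h₂ t) ^ 2
      * Real.exp (ρ * t)) (Set.Ici 0) ∧
    ∫ t in Set.Ici (0:ℝ), (g₁ t * (∫ s in (0:ℝ)..t, h₂ s) + h₁ t * h₂ t) ^ 2
      * Real.exp (ρ * t) ≤ 10 / ρ ^ 3 * (filNorm ρ h₁ g₁ ^ 2 * filNorm ρ h₂ g₂ ^ 2) := by
  have m1 := H₁.1.1
  have m2 : AEMeasurable (fun t => ∫ s in (0:ℝ)..t, h₂ s) (volume.restrict (Set.Ici (0:ℝ))) :=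
    (contOn_primitive fun x hx => H₂.1.ii_self hρ hx).aemeasurable measurableSet_Ici
  have m3 : AEMeasurable h₁ (volume.restrict (Set.Ici (0:ℝ))) :=
    (H₁.1.contOn hρ).aemeasurable measurableSet_Ici
  have m4 : AEMeasurable h₂ (volume.restrict (Set.Ici (0:ℝ))) :=
    (H₂.1.contOn hρ).aemeasurable measurableSet_Ici
  have m : AEMeasurable (fun t => g₁ t * (∫ s in (0:ℝ)..t, h₂ s) + h₁ t * h₂ t)
      (volume.restrict (Set.Ici (0:ℝ))) := (m1.mul m2).add (m3.mul m4)
  set N₁ := filNorm ρ h₁ g₁ with hN₁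
  set N₂ := filNorm ρ h₂ g₂ with hN₂
  have pw : ∀ t, 0 ≤ t → (g₁ t * (∫ s in (0:ℝ)..t, h₂ s) + h₁ t * h₂ t) ^ 2
      * Real.exp (ρ * t) ≤ (8 * N₂ ^ 2 / ρ ^ 3) * (g₁ t ^ 2 * Real.exp (ρ * t))
        + (2 * N₁ ^ 2 * N₂ ^ 2 / ρ ^ 2) * Real.exp (-ρ * t) := by
    intro t ht
    have b1 := H₁.sq_bound hρ ht
    have b2 := H₂.sq_bound hρ ht
    have b3 := H₂.prim_bound hρ ht
    rw [← hN₁] at b1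
    rw [← hN₂] at b2 b3
    set I := ∫ s in (0:ℝ)..t, h₂ s
    have b4 : I ^ 2 ≤ 4 * N₂ ^ 2 / ρ ^ 3 := by
      have := pow_le_pow_left₀ (abs_nonneg _) b3 2
      rw [sq_abs, mul_pow, div_pow, Real.sq_sqrt hρ.le] at this
      refine this.trans_eq ?_
      field_simp; norm_num
    have e1 : Real.exp (-ρ * t) * Real.exp (ρ * t) = 1 := by
      rw [← Real.exp_add]; simp
    have p1 := Real.exp_pos (ρ * t)
    have p2 := Real.exp_pos (-ρ * t)
    have b5 : (h₁ t * h₂ t) ^ 2 * Real.exp (ρ * t)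
        ≤ (N₁ ^ 2 * N₂ ^ 2 / ρ ^ 2) * Real.exp (-ρ * t) := by
      have c := mul_le_mul b1 b2 (by positivity) (by positivity)
      have c' := mul_le_mul_of_nonneg_right c p1.le
      have c2 : N₁ ^ 2 * Real.exp (-ρ * t) * (N₂ ^ 2 * Real.exp (-ρ * t)) * Real.exp (ρ * t)
        = N₁ ^ 2 * N₂ ^ 2 * Real.exp (-ρ * t) * (Real.exp (-ρ * t) * Real.exp (ρ * t)) := by
        ring
      rw [c2, e1] at c'
      rw [div_mul_eq_mul_div, le_div_iff₀ (by positivity)]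
      linarith
    have b6 : (g₁ t * I) ^ 2 * Real.exp (ρ * t)
        ≤ (4 * N₂ ^ 2 / ρ ^ 3) * (g₁ t ^ 2 * Real.exp (ρ * t)) := by
      have := mul_le_mul_of_nonneg_right b4
        (show 0 ≤ g₁ t ^ 2 * Real.exp (ρ * t) by positivity)
      linarith
    have b7 : (g₁ t * I + h₁ t * h₂ t) ^ 2 * Real.exp (ρ * t)
        ≤ (2 * (g₁ t * I) ^ 2 + 2 * (h₁ t * h₂ t) ^ 2) * Real.exp (ρ * t) := by
      gcongr
      nlinarith [sq_nonneg (g₁ t * I - h₁ t * h₂ t)]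
    have r1 : 8 * N₂ ^ 2 / ρ ^ 3 = 2 * (4 * N₂ ^ 2 / ρ ^ 3) := by ring
    have r2 : 2 * N₁ ^ 2 * N₂ ^ 2 / ρ ^ 2 = 2 * (N₁ ^ 2 * N₂ ^ 2 / ρ ^ 2) := by ring
    rw [r1, r2]
    linarith
  have i1 := H₁.1.2.2.const_mul (8 * N₂ ^ 2 / ρ ^ 3)
  have i2 := (exp_integrableOn_Ici hρ 0).const_mul (2 * N₁ ^ 2 * N₂ ^ 2 / ρ ^ 2)
  have i3 : IntegrableOn (fun t => (g₁ t * (∫ s in (0:ℝ)..t, h₂ s) + h₁ t * h₂ t) ^ 2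
      * Real.exp (ρ * t)) (Set.Ici 0) := by
    refine Integrable.mono' (i1.add i2) ?_ ?_
    · have : Measurable fun t => Real.exp (ρ * t) := by fun_prop
      exact ((m.pow_const 2).mul this.aemeasurable).aestronglyMeasurable
    · refine (ae_restrict_iff' measurableSet_Ici).2 (Eventually.of_forall fun t ht => ?_)
      rw [Real.norm_of_nonneg (by positivity)]
      exact pw t ht
  refine ⟨m, i3, ?_⟩
  have := setIntegral_mono_on i3 (i1.add i2) measurableSet_Ici pw
  refine this.trans ?_
  simp only [Pi.add_apply]
  rw [integral_add i1 i2, integral_const_mul, integral_const_mul]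
  have hE : ∫ t in Set.Ici (0:ℝ), Real.exp (-ρ * t) = 1 / ρ := by
    rw [integral_Ici_eq_integral_Ioi, integral_exp_mul_Ioi (by linarith)]
    simp
  rw [hE]
  have hle := integral_le_filNorm_sq ρ h₁ g₁
  rw [← hN₁] at hle
  calc _ ≤ 8 * N₂ ^ 2 / ρ ^ 3 * N₁ ^ 2 + 2 * N₁ ^ 2 * N₂ ^ 2 / ρ ^ 2 * (1 / ρ) := by gcongr
    _ = _ := by field_simp; ring

lemma MemFilZero.sub {ρ : ℝ} (hρ : 0 < ρ) {h₁ g₁ h₂ g₂ : ℝ → ℝ} (H₁ : MemFilZero ρ h₁ g₁)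
    (H₂ : MemFilZero ρ h₂ g₂) :
    MemFilZero ρ (fun t => h₁ t - h₂ t) (fun t => g₁ t - g₂ t) := by
  have m := H₁.1.1.sub H₂.1.1
  refine ⟨⟨m, ?_, ?_⟩, by simpa using H₁.2.sub H₂.2⟩
  · intro x hx
    rw [intervalIntegral.integral_sub (H₁.1.ii hρ hx) (H₂.1.ii hρ hx)]
    have := H₁.1.2.1 x hx
    have := H₂.1.2.1 x hx
    linarith
  · refine Integrable.mono' ((H₁.1.2.2.const_mul 2).add (H₂.1.2.2.const_mul 2)) ?_ ?_
    · have : Measurable fun t => Real.exp (ρ * t) := by fun_prop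
      exact ((m.pow_const 2).mul this.aemeasurable).aestronglyMeasurable
    · refine Eventually.of_forall fun t => ?_
      rw [Real.norm_of_nonneg (by positivity)]
      simp only [Pi.add_apply]
      have p1 := Real.exp_pos (ρ * t)
      nlinarith [mul_nonneg (sq_nonneg (g₁ t + g₂ t)) p1.le]

lemma MemFilZero.prod {ρ : ℝ} (hρ : 0 < ρ) {h g : ℝ → ℝ} (H : MemFilZero ρ h g) :
    MemFilZero ρ (fun ξ => h ξ * ∫ t in (0:ℝ)..ξ, h t)
        (fun t => g t * (∫ s in (0:ℝ)..t, h s) + h t * h t) := by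
  obtain ⟨b1, b2, -⟩ := bilin hρ H H
  refine ⟨⟨b1, ?_, b2⟩, ?_⟩
  · intro x hx
    simp only [intervalIntegral.integral_same, mul_zero, zero_add]
    exact ibp hx (H.1.ii hρ hx) (H.1.ii_self hρ hx) H.1.2.1
  · have t1 : Tendsto (fun ξ => |h ξ| * (filNorm ρ h g / Real.sqrt ρ * (2 / ρ))) atTop
        (nhds 0) := by
      simpa using H.2.abs.mul_const (filNorm ρ h g / Real.sqrt ρ * (2 / ρ))
    refine squeeze_zero_norm' ?_ t1
    filter_upwards [eventually_ge_atTop 0] with x hx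
    rw [norm_mul]
    exact mul_le_mul_of_nonneg_left (H.prim_bound hρ hx) (abs_nonneg _)

lemma prod_diff_bound {ρ : ℝ} (hρ : 0 < ρ) {h₁ g₁ h₂ g₂ : ℝ → ℝ} (H₁ : MemFilZero ρ h₁ g₁)
    (H₂ : MemFilZero ρ h₂ g₂) :
    filNorm ρ
      (fun ξ => h₁ ξ * (∫ t in (0:ℝ)..ξ, h₁ t) - h₂ ξ * ∫ t in (0:ℝ)..ξ, h₂ t)
      (fun t => (g₁ t * (∫ s in (0:ℝ)..t, h₁ s) + h₁ t * h₁ t)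
            - (g₂ t * (∫ s in (0:ℝ)..t, h₂ s) + h₂ t * h₂ t)) ^ 2
      ≤ 20 / ρ ^ 3 * (filNorm ρ h₁ g₁ ^ 2 + filNorm ρ h₂ g₂ ^ 2) *
        filNorm ρ (fun t => h₁ t - h₂ t) (fun t => g₁ t - g₂ t) ^ 2 := by
  have HD := H₁.sub hρ H₂
  obtain ⟨-, i1, b1⟩ := bilin hρ HD H₁
  obtain ⟨-, i2, b2⟩ := bilin hρ H₂ HD
  obtain ⟨⟨-, -, i3⟩, -⟩ := (H₁.prod hρ).sub hρ (H₂.prod hρ)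
  rw [filNorm_sq]
  simp only [intervalIntegral.integral_same, mul_zero, sub_zero]
  have := setIntegral_mono_on i3 ((i1.const_mul 2).add (i2.const_mul 2)) measurableSet_Ici ?_
  · simp only [Pi.add_apply] at this
    rw [integral_add (i1.const_mul 2) (i2.const_mul 2), integral_const_mul,
      integral_const_mul] at this
    have e : 20 / ρ ^ 3 = 2 * (10 / ρ ^ 3) := by ring
    rw [e]
    nlinarith
  · intro t ht
    have e : ∫ s in (0:ℝ)..t, (h₁ s - h₂ s) =
        (∫ s in (0:ℝ)..t, h₁ s) - ∫ s in (0:ℝ)..t, h₂ s :=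
      intervalIntegral.integral_sub (H₁.1.ii_self hρ ht) (H₂.1.ii_self hρ ht)
    simp only [Pi.add_apply]
    rw [e]
    set I₁ := ∫ s in (0:ℝ)..t, h₁ s
    set I₂ := ∫ s in (0:ℝ)..t, h₂ s
    have p1 := Real.exp_pos (ρ * t)
    have key : ∀ A B : ℝ, (A + B) ^ 2 * Real.exp (ρ * t)
        ≤ 2 * (A ^ 2 * Real.exp (ρ * t)) + 2 * (B ^ 2 * Real.exp (ρ * t)) := by
      intro A B
      nlinarith [mul_nonneg (sq_nonneg (A - B)) p1.le]
    refine le_trans (le_of_eq ?_) (key _ _)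
    ring

/-- if `β : X → H⁰_ρ` (with derivative assignment `δ`) is locally Lipschitz
in the ball sense and satisfies `‖β(x)‖_ρ ≤ K √(1 + ‖x‖)`, then `α(x) = β(x)·𝓘β(x)`
takes values in `H⁰_ρ`, is locally Lipschitz in the ball sense, and satisfies the linear
growth bound `‖α(x)‖_ρ ≤ C (1 + ‖x‖)`. -/
theorem filipovic_S_composition (ρ : ℝ) (hρ : 0 < ρ)
    {X : Type*} [NormedAddCommGroup X] [NormedSpace ℝ X]
    (β δ : X → ℝ → ℝ)
    (hmem : ∀ x : X, MemFil ρ (β x) (δ x))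
    (hlim : ∀ x : X, Tendsto (β x) atTop (nhds 0))
    (L : ℝ → ℝ) (hLmono : MonotoneOn L (Set.Ici 0))
    (hLnn : ∀ r : ℝ, 0 ≤ r → 0 ≤ L r)
    (hLip : ∀ r : ℝ, 0 ≤ r → ∀ x₁ x₂ : X, ‖x₁‖ ≤ r → ‖x₂‖ ≤ r →
      filNorm ρ (fun t => β x₁ t - β x₂ t) (fun t => δ x₁ t - δ x₂ t)
        ≤ L r * ‖x₁ - x₂‖)
    (K : ℝ) (hK : 0 < K)
    (hgrowth : ∀ x : X, filNorm ρ (β x) (δ x) ≤ K * Real.sqrt (1 + ‖x‖)) :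
    (∀ x : X,
      MemFil ρ (fun ξ => β x ξ * ∫ t in (0:ℝ)..ξ, β x t)
        (fun t => δ x t * (∫ s in (0:ℝ)..t, β x s) + β x t * β x t) ∧
      Tendsto (fun ξ => β x ξ * ∫ t in (0:ℝ)..ξ, β x t) atTop (nhds 0)) ∧
    (∃ L' : ℝ → ℝ, MonotoneOn L' (Set.Ici 0) ∧ (∀ r : ℝ, 0 ≤ r → 0 ≤ L' r) ∧
      ∀ r : ℝ, 0 ≤ r → ∀ x₁ x₂ : X, ‖x₁‖ ≤ r → ‖x₂‖ ≤ r →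
        filNorm ρ
          (fun ξ => β x₁ ξ * (∫ t in (0:ℝ)..ξ, β x₁ t)
            - β x₂ ξ * ∫ t in (0:ℝ)..ξ, β x₂ t)
          (fun t => (δ x₁ t * (∫ s in (0:ℝ)..t, β x₁ s) + β x₁ t * β x₁ t)
            - (δ x₂ t * (∫ s in (0:ℝ)..t, β x₂ s) + β x₂ t * β x₂ t))
          ≤ L' r * ‖x₁ - x₂‖) ∧
    (∃ C : ℝ, 0 < C ∧ ∀ x : X,
      filNorm ρ (fun ξ => β x ξ * ∫ t in (0:ℝ)..ξ, β x t)
        (fun t => δ x t * (∫ s in (0:ℝ)..t, β x s) + β x t * β x t)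
        ≤ C * (1 + ‖x‖)) := by
  have H : ∀ x, MemFilZero ρ (β x) (δ x) := fun x => ⟨hmem x, hlim x⟩
  have hN : ∀ x, filNorm ρ (β x) (δ x) ^ 2 ≤ K ^ 2 * (1 + ‖x‖) := by
    intro x
    have := pow_le_pow_left₀ (filNorm_nonneg _ _ _) (hgrowth x) 2
    rwa [mul_pow, Real.sq_sqrt (by positivity)] at this
  refine ⟨fun x => (H x).prod hρ, ?_, ?_⟩
  · refine ⟨fun r => Real.sqrt (40 / ρ ^ 3 * K ^ 2 * (1 + r)) * L r, ?_, ?_, ?_⟩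
    · intro a ha b hb hab
      have h1 := hLmono ha hb hab
      have h2 := hLnn a ha
      simp only
      gcongr
    · intro r hr
      exact mul_nonneg (Real.sqrt_nonneg _) (hLnn r hr)
    · intro r hr x₁ x₂ h1 h2
      have b := prod_diff_bound hρ (H x₁) (H x₂)
      have hL := hLip r hr x₁ x₂ h1 h2
      have hL0 := hLnn r hr
      refine (pow_le_pow_iff_left₀ (filNorm_nonneg _ _ _) (by positivity) two_ne_zero).1 (b.trans ?_)
      have hL2 := pow_le_pow_left₀ (filNorm_nonneg _ _ _) hL 2
      have e : (Real.sqrt (40 / ρ ^ 3 * K ^ 2 * (1 + r)) * L r * ‖x₁ - x₂‖) ^ 2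
          = 20 / ρ ^ 3 * (K ^ 2 * (1 + r) + K ^ 2 * (1 + r)) * (L r * ‖x₁ - x₂‖) ^ 2 := by
        rw [mul_assoc, mul_pow, Real.sq_sqrt (by positivity)]
        ring
      rw [e]
      have n1 : filNorm ρ (β x₁) (δ x₁) ^ 2 ≤ K ^ 2 * (1 + r) := (hN x₁).trans (by gcongr)
      have n2 : filNorm ρ (β x₂) (δ x₂) ^ 2 ≤ K ^ 2 * (1 + r) := (hN x₂).trans (by gcongr)
      gcongr
  · refine ⟨Real.sqrt (10 / ρ ^ 3) * K ^ 2, by positivity, fun x => ?_⟩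
    obtain ⟨-, -, b⟩ := bilin hρ (H x) (H x)
    refine (pow_le_pow_iff_left₀ (filNorm_nonneg _ _ _) (by positivity) two_ne_zero).1 ?_
    rw [filNorm_sq]
    simp only [intervalIntegral.integral_same, mul_zero]
    rw [mul_assoc, mul_pow, Real.sq_sqrt (by positivity)]
    have n := hN x
    have n0 : 0 ≤ filNorm ρ (β x) (δ x) ^ 2 := sq_nonneg _
    have : filNorm ρ (β x) (δ x) ^ 2 * filNorm ρ (β x) (δ x) ^ 2 ≤ (K ^ 2 * (1 + ‖x‖)) ^ 2 := by
      rw [sq (K ^ 2 * (1 + ‖x‖))]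
      gcongr
    have p : 0 ≤ 10 / ρ ^ 3 := by positivity
    have := mul_le_mul_of_nonneg_left this p
    linarith
end

section
/- Let 0 < ρ < ρ' and let X be a normed space. Suppose γ assigns to each x ∈ X a function γ(x) in the Filipović space H_{ρ'} with lim_{ξ→∞} γ(x)(ξ) = 0, and that γ is locally Lipschitz in the ball sense as a map into (H_{ρ'}, ‖·‖_{ρ'}) with increasing Lipschitz function L_γ and increasing boundedness function B_γ (so ‖γ(x₁) − γ(x₂)‖_{ρ'} ≤ L_γ(r)‖x₁ − x₂‖_X and ‖γ(x)‖_{ρ'} ≤ B_γ(r) whenever the X-norms of the arguments are at most r). Set K_{ρ,ρ'} := (1 + 1/√ρ)·√(1/(ρ'(ρ'−ρ))) and V_K(r) := r(1+r)e^{Kr}. Then for every λ > 0 the map α_λ(x) := γ(x)·(1 − λ·exp(−∫_0^· γ(x)(t) dt)) satisfies: α_λ(x) belongs to H_ρ with lim_{ξ→∞} α_λ(x)(ξ) = 0 for every x; α_λ is locally Lipschitz in the ball sense as a map into (H_ρ, ‖·‖_ρ); and there exists a constant K > 0, independent of λ, such that for every r ≥ 0: ‖α_λ(x₁) − α_λ(x₂)‖_ρ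 ≤ K·L_γ(r)·((1+λ) + λ·V_{K_{ρ,ρ'}}(B_γ(r)))·‖x₁ − x₂‖_X whenever ‖x₁‖_X, ‖x₂‖_X ≤ r, and ‖α_λ(x)‖_ρ ≤ K·(B_γ(r) + λ·V_{K_{ρ,ρ'}}(B_γ(r))) whenever ‖x‖_X ≤ r. -/
open MeasureTheory Filter

/-- The constant `K_{ρ,ρ'} = (1 + 1/√ρ)·√(1/(ρ'(ρ'−ρ)))`. -/
noncomputable def Krr (ρ ρ' : ℝ) : ℝ :=
  (1 + 1 / Real.sqrt ρ) * Real.sqrt (1 / (ρ' * (ρ' - ρ)))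

/-- The strictly increasing function `V_K(r) = r(1+r)e^{Kr}`. -/
noncomputable def VK (K r : ℝ) : ℝ := r * (1 + r) * Real.exp (K * r)

open Set in
lemma fil_integrable_s15 {ρ : ℝ} (hρ : 0 < ρ) {h g : ℝ → ℝ} (hm : MemFil ρ h g) :
    IntegrableOn g (Ici (0:ℝ)) := by
  obtain ⟨h1, h2, h3⟩ := hm
  have he : IntegrableOn (fun t : ℝ => Real.exp (-ρ * t)) (Ici (0:ℝ)) :=
    Iff.mpr integrableOn_Ici_iff_integrableOn_Ioi (integrableOn_exp_mul_Ioi (by linarith) 0)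
  refine Integrable.mono' (h3.add he) h1.aestronglyMeasurable (Eventually.of_forall fun t => ?_)
  have e1 := Real.exp_pos (ρ * t)
  have e2 : Real.exp (-ρ * t) * Real.exp (ρ * t) = 1 := by
    rw [← Real.exp_add]; simp
  have e3 := Real.exp_pos (-ρ * t)
  simp only [Pi.add_apply, Real.norm_eq_abs]
  rw [abs_le]
  constructor
  · nlinarith [mul_nonneg e1.le (sq_nonneg (g t + Real.exp (-ρ * t))), mul_pos e1 e3]
  · nlinarith [mul_nonneg e1.le (sq_nonneg (g t - Real.exp (-ρ * t)))]

open Set in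
lemma fil_continuous {ρ : ℝ} (hρ : 0 < ρ) {h g : ℝ → ℝ} (hm : MemFil ρ h g) :
    ContinuousOn h (Ici (0:ℝ)) := by
  have hi := fil_integrable_s15 hρ hm
  have hi' : Integrable (indicator (Ici 0) g) := hi.integrable_indicator measurableSet_Ici
  have hc : Continuous (fun x : ℝ => h 0 + ∫ t in (0:ℝ)..x, indicator (Ici 0) g t) :=
    continuous_const.add (intervalIntegral.continuous_primitive
      (fun a b => hi'.intervalIntegrable) 0)
  refine hc.continuousOn.congr fun x hx => ?_
  rw [hm.2.1 x hx]
  congr 1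
  refine intervalIntegral.integral_congr fun t ht => ?_
  rw [uIcc_of_le hx] at ht
  simp [indicator, ht.1]

open Set in
lemma fil_decay_sq {ρ : ℝ} (hρ : 0 < ρ) {h g : ℝ → ℝ} (hm : MemFil ρ h g)
    (hl : Tendsto h atTop (nhds 0)) {t : ℝ} (ht : 0 ≤ t) :
    (h t) ^ 2 ≤ (∫ s in Ici (0:ℝ), (g s) ^ 2 * Real.exp (ρ * s)) * (Real.exp (-ρ * t) / ρ) := by
  have hi := fil_integrable_s15 hρ hm
  have hS := hm.2.2
  set S := ∫ s in Ici (0:ℝ), (g s) ^ 2 * Real.exp (ρ * s) with hSdef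
  have hit : IntegrableOn g (Ioi t) := hi.mono_set fun x hx => ht.trans (le_of_lt hx)
  have hSt : IntegrableOn (fun s => (g s) ^ 2 * Real.exp (ρ * s)) (Ioi t) :=
    hS.mono_set fun x hx => ht.trans (le_of_lt hx)
  have he : IntegrableOn (fun s : ℝ => Real.exp (-ρ * s)) (Ioi t) :=
    integrableOn_exp_mul_Ioi (by linarith) t
  have hev : ∫ s in Ioi t, Real.exp (-ρ * s) = Real.exp (-ρ * t) / ρ := by
    rw [integral_exp_mul_Ioi (by linarith)]; field_simp
  have hSle : ∫ s in Ioi t, (g s) ^ 2 * Real.exp (ρ * s) ≤ S := by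
    refine setIntegral_mono_set hS (Eventually.of_forall fun s => by positivity) ?_
    exact (show Ioi t ⊆ Ici 0 from fun x hx => ht.trans (le_of_lt hx)).eventuallyLE
  have hht : h t = - ∫ s in Ioi t, g s := by
    have h1 := intervalIntegral_tendsto_integral_Ioi t hit tendsto_id
    have h2 : Tendsto (fun x => h x - h t) atTop (nhds (0 - h t)) := hl.sub_const _
    have h3 : (fun x => h x - h t) =ᶠ[atTop] fun x => ∫ s in t..x, g s := by
      filter_upwards [eventually_ge_atTop t] with x hx
      rw [hm.2.1 x (ht.trans hx), hm.2.1 t ht, ← intervalIntegral.integral_add_adjacent_intervals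
        (a := 0) (b := t) (c := x)]
      · ring
      · rw [intervalIntegrable_iff_integrableOn_Ioc_of_le ht]
        exact hi.mono_set fun y hy => hy.1.le
      · rw [intervalIntegrable_iff_integrableOn_Ioc_of_le hx]
        exact hi.mono_set fun y hy => ht.trans hy.1.le
    have := tendsto_nhds_unique (h2.congr' h3) h1
    linarith
  set w := Real.exp (-ρ * t) / ρ with hw
  have hw0 : 0 < w := by positivity
  set A := |h t| with hA
  have hkey : ∀ c : ℝ, 0 < c → 2 * A ≤ c * S + w / c := by
    intro c hc
    have hb : A ≤ ∫ s in Ioi t, ((c * ((g s) ^ 2 * Real.exp (ρ * s)) + c⁻¹ * Real.exp (-ρ * s)) / 2) := by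
      rw [hA, hht, abs_neg, ← Real.norm_eq_abs]
      refine norm_integral_le_of_norm_le (((hSt.const_mul c).add (he.const_mul c⁻¹)).div_const 2)
        (Eventually.of_forall fun s => ?_)
      have e1 := Real.exp_pos (ρ * s)
      have e2 : Real.exp (-ρ * s) * Real.exp (ρ * s) = 1 := by
        rw [← Real.exp_add]; simp
      have e3 := Real.exp_pos (-ρ * s)
      have e4 : c * ((g s) ^ 2 * Real.exp (ρ * s)) + c⁻¹ * Real.exp (-ρ * s) - 2 * |g s|
          = c * Real.exp (ρ * s) * (|g s| - c⁻¹ * Real.exp (-ρ * s)) ^ 2 := by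
        have : c * c⁻¹ = 1 := mul_inv_cancel₀ hc.ne'
        rw [sub_sq, sq_abs]
        linear_combination (-2 * |g s| * (Real.exp (-ρ * s) * Real.exp (ρ * s)) * (-1) + c⁻¹ * Real.exp (-ρ * s) * (-1) * (Real.exp (-ρ * s) * Real.exp (ρ * s))) * this + (2 * |g s| - c⁻¹ * Real.exp (-ρ * s)) * e2
      have : 0 ≤ c * Real.exp (ρ * s) * (|g s| - c⁻¹ * Real.exp (-ρ * s)) ^ 2 := by positivity
      rw [Real.norm_eq_abs]
      linarith
    rw [integral_div, integral_add (hSt.const_mul c) (he.const_mul c⁻¹), integral_const_mul,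
      integral_const_mul, hev] at hb
    have := mul_le_mul_of_nonneg_left hSle hc.le
    rw [div_eq_inv_mul w c]
    linarith
  rw [← sq_abs, ← hA]
  rcases (abs_nonneg (h t)).eq_or_lt with h0 | h0
  · have : 0 ≤ S := integral_nonneg fun s => by positivity
    rw [hA, ← h0, zero_pow two_ne_zero]; positivity
  · have hA0 : 0 < A := h0
    have := hkey (w / A) (by positivity)
    have e : w / (w / A) = A := by field_simp
    rw [e] at this
    have : A ≤ w / A * S := by linarith
    calc A ^ 2 = A * A := by ring
      _ ≤ A * (w / A * S) := by gcongr
      _ = S * w := by field_simp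

open Set in
lemma fil_int_le_s15 {ρ N : ℝ} (hN : 0 ≤ N) {h g : ℝ → ℝ} (hb : filNorm ρ h g ≤ N) :
    ∫ s in Ici (0:ℝ), (g s) ^ 2 * Real.exp (ρ * s) ≤ N ^ 2 := by
  have := (Real.sqrt_le_left hN).mp hb
  nlinarith [sq_nonneg (h 0)]

open Set in
lemma fil_zero_le {ρ N : ℝ} (hN : 0 ≤ N) {h g : ℝ → ℝ} (hb : filNorm ρ h g ≤ N) :
    |h 0| ≤ N := by
  have := (Real.sqrt_le_left hN).mp hb
  have h2 : 0 ≤ ∫ s in Ici (0:ℝ), (g s) ^ 2 * Real.exp (ρ * s) :=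
    integral_nonneg fun s => by positivity
  exact abs_le_of_sq_le_sq (by linarith) hN

open Set in
lemma fil_decay {ρ N : ℝ} (hρ : 0 < ρ) (hN : 0 ≤ N) {h g : ℝ → ℝ} (hm : MemFil ρ h g)
    (hl : Tendsto h atTop (nhds 0)) (hb : filNorm ρ h g ≤ N) {t : ℝ} (ht : 0 ≤ t) :
    |h t| ≤ N * (1 / Real.sqrt ρ) * Real.exp (-(ρ / 2) * t) := by
  have h1 := fil_decay_sq hρ hm hl ht
  have h2 := fil_int_le_s15 hN hb
  refine abs_le_of_sq_le_sq (h1.trans ?_) (by positivity)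
  have e : Real.exp (-ρ * t) = Real.exp (-(ρ / 2) * t) ^ 2 := by
    rw [← Real.exp_nat_mul]; congr 1; push_cast; ring
  calc _ ≤ N ^ 2 * (Real.exp (-ρ * t) / ρ) := by gcongr
    _ = _ := by
      rw [mul_pow, mul_pow, div_pow, Real.sq_sqrt hρ.le, e]; ring

lemma krr_ge {ρ ρ' : ℝ} (hρ : 0 < ρ) (hρρ' : ρ < ρ') :
    1 / Real.sqrt ρ' * (2 / ρ') ≤ Krr ρ ρ' := by
  have hρ' : 0 < ρ' := hρ.trans hρρ'
  have hd : 0 < ρ' - ρ := by linarith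
  unfold Krr
  rw [Real.sqrt_div zero_le_one, Real.sqrt_one, Real.sqrt_mul hρ'.le]
  have a1 := Real.sqrt_pos.mpr hρ
  have a2 := Real.sqrt_pos.mpr hρ'
  have a3 := Real.sqrt_pos.mpr hd
  have s1 := Real.sq_sqrt hρ.le
  have s3 := Real.sq_sqrt hd.le
  have : 2 / ρ' ≤ 1 / Real.sqrt ρ * (1 / Real.sqrt (ρ' - ρ)) := by
    rw [one_div_mul_one_div, div_le_div_iff₀ hρ' (by positivity)]
    nlinarith [sq_nonneg (Real.sqrt ρ - Real.sqrt (ρ' - ρ))]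
  calc 1 / Real.sqrt ρ' * (2 / ρ') ≤ 1 / Real.sqrt ρ' * (1 / Real.sqrt ρ * (1 / Real.sqrt (ρ' - ρ))) := by gcongr
    _ ≤ 1 / Real.sqrt ρ' * ((1 + 1 / Real.sqrt ρ) * (1 / Real.sqrt (ρ' - ρ))) := by
      gcongr; linarith
    _ = _ := by field_simp

open Set in
lemma fil_I_le {ρ ρ' N : ℝ} (hρ : 0 < ρ) (hρρ' : ρ < ρ') (hN : 0 ≤ N) {h : ℝ → ℝ}
    (hb : ∀ t, 0 ≤ t → |h t| ≤ N * (1 / Real.sqrt ρ') * Real.exp (-(ρ' / 2) * t))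
    {t : ℝ} (ht : 0 ≤ t) :
    |∫ s in (0:ℝ)..t, h s| ≤ Krr ρ ρ' * N := by
  have hρ' : 0 < ρ' := hρ.trans hρρ'
  have hcont : Continuous fun s : ℝ => N * (1 / Real.sqrt ρ') * Real.exp (-(ρ' / 2) * s) := by
    fun_prop
  have h1 := intervalIntegral.norm_integral_le_of_norm_le (f := h) ht
    (μ := volume) (Eventually.of_forall fun s hs => hb s hs.1.le) (hcont.intervalIntegrable 0 t)
  rw [Real.norm_eq_abs] at h1
  refine h1.trans ?_
  rw [intervalIntegral.integral_const_mul]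
  have h2 : ∫ s in (0:ℝ)..t, Real.exp (-(ρ' / 2) * s) ≤ 2 / ρ' := by
    rw [intervalIntegral.integral_of_le ht]
    have e : ∫ s in Ioi (0:ℝ), Real.exp (-(ρ' / 2) * s) = 2 / ρ' := by
      rw [integral_exp_mul_Ioi (by linarith)]; simp
    rw [← e]
    exact setIntegral_mono_set (integrableOn_exp_mul_Ioi (by linarith) 0)
      (Eventually.of_forall fun s => (Real.exp_pos _).le)
      (Ioc_subset_Ioi_self).eventuallyLE
  calc _ ≤ N * (1 / Real.sqrt ρ') * (2 / ρ') := by gcongr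
    _ = (1 / Real.sqrt ρ' * (2 / ρ')) * N := by ring
    _ ≤ _ := by gcongr; exact krr_ge hρ hρρ'

open Set in
lemma fil_key {ρ ρ' : ℝ} (hρ : 0 < ρ) (hρρ' : ρ < ρ') {u v h G : ℝ → ℝ} {U V a b c d : ℝ}
    (hU : 0 ≤ U) (hV : 0 ≤ V) (ha : 0 ≤ a) (hb : 0 ≤ b) (hc : 0 ≤ c) (hd : 0 ≤ d)
    (hu : IntegrableOn (fun t => (u t) ^ 2 * Real.exp (ρ' * t)) (Ici (0:ℝ)))
    (huU : ∫ t in Ici (0:ℝ), (u t) ^ 2 * Real.exp (ρ' * t) ≤ U ^ 2)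
    (hv : IntegrableOn (fun t => (v t) ^ 2 * Real.exp (ρ' * t)) (Ici (0:ℝ)))
    (hvV : ∫ t in Ici (0:ℝ), (v t) ^ 2 * Real.exp (ρ' * t) ≤ V ^ 2)
    (hG : ∀ t, 0 ≤ t → |G t| ≤ a * |u t| + b * |v t| + c * Real.exp (-ρ' * t))
    (hh : |h 0| ≤ d) :
    (AEMeasurable G (volume.restrict (Ici (0:ℝ))) →
      IntegrableOn (fun t => (G t) ^ 2 * Real.exp (ρ * t)) (Ici (0:ℝ))) ∧
    filNorm ρ h G ≤ 2 * (d + a * U + b * V + c * (1 / Real.sqrt ρ')) := by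
  have hρ' : 0 < ρ' := hρ.trans hρρ'
  have he : IntegrableOn (fun t : ℝ => Real.exp (-ρ' * t)) (Ici (0:ℝ)) :=
    Iff.mpr integrableOn_Ici_iff_integrableOn_Ioi (integrableOn_exp_mul_Ioi (by linarith) 0)
  have hev : ∫ s in Ici (0:ℝ), Real.exp (-ρ' * s) = 1 / ρ' := by
    rw [integral_Ici_eq_integral_Ioi, integral_exp_mul_Ioi (by linarith)]; simp
  have hpt : ∀ t, 0 ≤ t → (G t) ^ 2 * Real.exp (ρ * t) ≤
      3 * a ^ 2 * ((u t) ^ 2 * Real.exp (ρ' * t)) + 3 * b ^ 2 * ((v t) ^ 2 * Real.exp (ρ' * t))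
        + 3 * c ^ 2 * Real.exp (-ρ' * t) := by
    intro t ht
    have h1 : (G t) ^ 2 ≤ 3 * (a ^ 2 * (u t) ^ 2 + b ^ 2 * (v t) ^ 2 + c ^ 2 * Real.exp (-ρ' * t) ^ 2) := by
      rw [← sq_abs (G t), ← sq_abs (u t), ← sq_abs (v t)]
      have := pow_le_pow_left₀ (abs_nonneg _) (hG t ht) 2
      refine this.trans ?_
      nlinarith [sq_nonneg (a * |u t| - b * |v t|), sq_nonneg (a * |u t| - c * Real.exp (-ρ' * t)),
        sq_nonneg (b * |v t| - c * Real.exp (-ρ' * t))]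
    have h2 : Real.exp (ρ * t) ≤ Real.exp (ρ' * t) := by
      apply Real.exp_le_exp.mpr; gcongr
    have h3 : Real.exp (-ρ' * t) ^ 2 * Real.exp (ρ' * t) = Real.exp (-ρ' * t) := by
      rw [pow_two, mul_assoc, ← Real.exp_add]; simp
    calc (G t) ^ 2 * Real.exp (ρ * t) ≤ (3 * (a ^ 2 * (u t) ^ 2 + b ^ 2 * (v t) ^ 2 + c ^ 2 * Real.exp (-ρ' * t) ^ 2)) * Real.exp (ρ' * t) := by gcongr
      _ = _ := by linear_combination 3 * c ^ 2 * h3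
  have hdom := ((hu.const_mul (3 * a ^ 2)).add (hv.const_mul (3 * b ^ 2))).add
    (he.const_mul (3 * c ^ 2))
  have hae : ∀ᵐ t ∂(volume.restrict (Ici (0:ℝ))), (G t) ^ 2 * Real.exp (ρ * t) ≤
      3 * a ^ 2 * ((u t) ^ 2 * Real.exp (ρ' * t)) + 3 * b ^ 2 * ((v t) ^ 2 * Real.exp (ρ' * t))
        + 3 * c ^ 2 * Real.exp (-ρ' * t) :=
    (ae_restrict_iff' measurableSet_Ici).mpr (Eventually.of_forall fun t ht => hpt t ht)
  constructor
  · intro hGm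
    refine Integrable.mono' hdom ?_ ?_
    · exact ((hGm.pow_const 2).mul (by fun_prop)).aestronglyMeasurable
    · filter_upwards [hae] with t ht
      rw [Real.norm_eq_abs, abs_of_nonneg (by positivity)]
      exact ht
  · have h1 := integral_mono_of_nonneg (μ := volume.restrict (Ici (0:ℝ)))
      (Eventually.of_forall fun t => by positivity) hdom hae
    have h2 : ∫ t in Ici (0:ℝ), (3 * a ^ 2 * ((u t) ^ 2 * Real.exp (ρ' * t)) + 3 * b ^ 2 * ((v t) ^ 2 * Real.exp (ρ' * t))
        + 3 * c ^ 2 * Real.exp (-ρ' * t)) ≤ 3 * a ^ 2 * U ^ 2 + 3 * b ^ 2 * V ^ 2 + 3 * c ^ 2 * (1 / ρ') := by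
      have hadd : Integrable (fun t => 3 * a ^ 2 * ((u t) ^ 2 * Real.exp (ρ' * t)) + 3 * b ^ 2 * ((v t) ^ 2 * Real.exp (ρ' * t))) (volume.restrict (Ici (0:ℝ))) :=
        (hu.const_mul (3 * a ^ 2)).add (hv.const_mul (3 * b ^ 2))
      rw [integral_add hadd (he.const_mul (3 * c ^ 2)),
        integral_add (hu.const_mul (3 * a ^ 2)) (hv.const_mul (3 * b ^ 2)),
        integral_const_mul, integral_const_mul, integral_const_mul, hev]
      gcongr
    have hs : 1 / ρ' = (1 / Real.sqrt ρ') ^ 2 := by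
      rw [div_pow, Real.sq_sqrt hρ'.le]; simp
    have hs0 : 0 ≤ 1 / Real.sqrt ρ' := by positivity
    unfold filNorm
    apply Real.sqrt_le_iff.mpr
    refine ⟨by positivity, ?_⟩
    have h4 : (h 0) ^ 2 ≤ d ^ 2 := by
      rw [← sq_abs]; gcongr
    have h5 := h1.trans h2
    rw [hs] at h5
    generalize 1 / Real.sqrt ρ' = s at *
    have p1 : 0 ≤ a * U := by positivity
    have p2 : 0 ≤ b * V := by positivity
    have p3 : 0 ≤ c * s := by positivity
    nlinarith [mul_nonneg hd p1, mul_nonneg hd p2, mul_nonneg hd p3, mul_nonneg p1 p2,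
      mul_nonneg p1 p3, mul_nonneg p2 p3, sq_nonneg d, sq_nonneg (a*U), sq_nonneg (b*V), sq_nonneg (c*s)]

open Set in
lemma fil_prod {ρ : ℝ} (hρ : 0 < ρ) {h g : ℝ → ℝ} (hm : MemFil ρ h g) (lam : ℝ) {x : ℝ}
    (hx : 0 ≤ x) :
    h x * (1 - lam * Real.exp (-(∫ t in (0:ℝ)..x, h t))) =
      h 0 * (1 - lam * Real.exp (-(∫ t in (0:ℝ)..0, h t))) +
      ∫ t in (0:ℝ)..x, (g t * (1 - lam * Real.exp (-(∫ s in (0:ℝ)..t, h s)))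
          + h t * (lam * h t * Real.exp (-(∫ s in (0:ℝ)..t, h s)))) := by
  have hi := fil_integrable_s15 hρ hm
  set g' := indicator (Ici 0) g with hg'
  have hi' : Integrable g' := hi.integrable_indicator measurableSet_Ici
  set P : ℝ → ℝ := fun x => ∫ t in (0:ℝ)..x, g' t with hP
  set H : ℝ → ℝ := fun x => h 0 + P x with hH
  have hc : Continuous H :=
    continuous_const.add (intervalIntegral.continuous_primitive
      (fun a b => hi'.intervalIntegrable) 0)
  have hHh : ∀ y, 0 ≤ y → H y = h y := by
    intro y hy
    rw [hm.2.1 y hy]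
    simp only [hH, hP]
    congr 1
    refine intervalIntegral.integral_congr fun t ht => ?_
    rw [uIcc_of_le hy] at ht
    simp [hg', ht.1]
  have hI : ∀ y, 0 ≤ y → ∫ t in (0:ℝ)..y, h t = ∫ t in (0:ℝ)..y, H t := by
    intro y hy
    refine intervalIntegral.integral_congr fun t ht => ?_
    rw [uIcc_of_le hy] at ht
    exact (hHh t ht.1).symm
  set W : ℝ → ℝ := fun y => 1 - lam * Real.exp (-(∫ t in (0:ℝ)..y, H t)) with hW
  have hIc : Continuous fun y => ∫ t in (0:ℝ)..y, H t :=
    intervalIntegral.continuous_primitive (fun a b => hc.intervalIntegrable a b) 0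
  have hWd : ∀ y, HasDerivAt W (lam * H y * Real.exp (-(∫ t in (0:ℝ)..y, H t))) y := by
    intro y
    have h1 : HasDerivAt (fun y => ∫ t in (0:ℝ)..y, H t) (H y) y :=
      hc.integral_hasStrictDerivAt 0 y |>.hasDerivAt
    have h2 := ((h1.neg.exp).const_mul lam).const_sub 1
    exact h2.congr_deriv (by simp only [Pi.neg_apply]; ring)
  have hWc : ContDiff ℝ 1 W := by
    rw [contDiff_one_iff_deriv]
    refine ⟨fun y => (hWd y).differentiableAt, ?_⟩
    have : deriv W = fun y => lam * H y * Real.exp (-(∫ t in (0:ℝ)..y, H t)) :=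
      funext fun y => (hWd y).deriv
    rw [this]
    fun_prop
  have acW : AbsolutelyContinuousOnInterval W 0 x :=
    hWc.contDiffOn.absolutelyContinuousOnInterval
  have acP : AbsolutelyContinuousOnInterval P 0 x :=
    (hi'.intervalIntegrable (a := 0) (b := x)).absolutelyContinuousOnInterval_intervalIntegral
      (c := 0) (by simp)
  have acC : AbsolutelyContinuousOnInterval (fun _ : ℝ => h 0) 0 x :=
    (contDiff_const (n := 1)).contDiffOn.absolutelyContinuousOnInterval
  have acH : AbsolutelyContinuousOnInterval H 0 x := acC.add acP
  have hmain := acH.integral_deriv_mul_eq_sub acW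
  have h0 := hHh 0 le_rfl
  have hfin : ∫ t in (0:ℝ)..x, (g t * (1 - lam * Real.exp (-(∫ s in (0:ℝ)..t, h s)))
          + h t * (lam * h t * Real.exp (-(∫ s in (0:ℝ)..t, h s))))
      = ∫ t in (0:ℝ)..x, (deriv H t * W t + H t * deriv W t) := by
    apply intervalIntegral.integral_congr_ae
    filter_upwards [(hi'.intervalIntegrable (a := 0) (b := x)).ae_hasDerivAt_integral] with t ht htx
    have ht1 := (ht (uIoc_subset_uIcc htx) 0 (by simp)).const_add (h 0)
    rw [uIoc_of_le hx] at htx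
    have ht0 : 0 ≤ t := htx.1.le
    have hd : deriv H t = g' t := ht1.deriv
    rw [hd, (hWd t).deriv, hHh t ht0, hI t ht0]
    simp [hg', ht0, hW]
  rw [hfin, hmain, hHh x hx, h0, hI x hx, hI 0 le_rfl]
  simp only [hW]
  ring

lemma exp_diff_le {a b c : ℝ} (ha : a ≤ c) (hb : b ≤ c) :
    |Real.exp a - Real.exp b| ≤ Real.exp c * |a - b| := by
  have key : ∀ a b : ℝ, a ≤ c → Real.exp a - Real.exp b ≤ Real.exp c * |a - b| := by
    intro a b ha
    have h1 := Real.add_one_le_exp (b - a)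
    have h2 : Real.exp b = Real.exp a * Real.exp (b - a) := by rw [← Real.exp_add]; congr 1; ring
    have h3 := Real.exp_pos a
    have h4 : Real.exp a ≤ Real.exp c := Real.exp_le_exp.mpr ha
    calc Real.exp a - Real.exp b ≤ Real.exp a * (a - b) := by rw [h2]; nlinarith
      _ ≤ Real.exp a * |a - b| := by gcongr; exact le_abs_self _
      _ ≤ _ := by gcongr
  rw [abs_le']
  refine ⟨key a b ha, ?_⟩
  rw [neg_sub, abs_sub_comm]
  exact key b a hb

open Set in
lemma fil_I_cont {h : ℝ → ℝ} (hc : ContinuousOn h (Ici (0:ℝ))) :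
    ContinuousOn (fun t => ∫ s in (0:ℝ)..t, h s) (Ici (0:ℝ)) := by
  have h1 : Continuous (fun s : ℝ => h (max 0 s)) := by
    rw [← continuousOn_univ]
    exact hc.comp (by fun_prop) fun s _ => le_max_left 0 s
  have h2 : Continuous (fun t => ∫ s in (0:ℝ)..t, h (max 0 s)) :=
    intervalIntegral.continuous_primitive (fun a b => h1.intervalIntegrable a b) 0
  refine h2.continuousOn.congr fun t ht => ?_
  refine intervalIntegral.integral_congr fun s hs => ?_
  rw [uIcc_of_le ht] at hs
  simp [max_eq_right hs.1]

open Set in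
lemma fil_I_exp {ρ ρ' N : ℝ} (hρ : 0 < ρ) (hρρ' : ρ < ρ') (hN : 0 ≤ N) {h g : ℝ → ℝ}
    (hm : MemFil ρ' h g) (hl : Tendsto h atTop (nhds 0)) (hb : filNorm ρ' h g ≤ N)
    {t : ℝ} (ht : 0 ≤ t) :
    -(∫ s in (0:ℝ)..t, h s) ≤ Krr ρ ρ' * N :=
  (neg_le_abs _).trans (fil_I_le hρ hρρ' hN
    (fun _ hs => fil_decay (hρ.trans hρρ') hN hm hl hb hs) ht)

lemma krr_nonneg (ρ ρ' : ℝ) : 0 ≤ Krr ρ ρ' := by unfold Krr; positivity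

open Set in
lemma fil_bound {ρ ρ' N lam : ℝ} (hρ : 0 < ρ) (hρρ' : ρ < ρ') (hN : 0 ≤ N) (hlam : 0 < lam)
    {h g : ℝ → ℝ}
    (hm : MemFil ρ' h g) (hl : Tendsto h atTop (nhds 0)) (hb : filNorm ρ' h g ≤ N) :
    MemFil ρ
        (fun ξ => h ξ * (1 - lam * Real.exp (-(∫ t in (0:ℝ)..ξ, h t))))
        (fun t => g t * (1 - lam * Real.exp (-(∫ s in (0:ℝ)..t, h s)))
          + h t * (lam * h t * Real.exp (-(∫ s in (0:ℝ)..t, h s)))) ∧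
    Tendsto (fun ξ => h ξ * (1 - lam * Real.exp (-(∫ t in (0:ℝ)..ξ, h t)))) atTop (nhds 0) ∧
    filNorm ρ
        (fun ξ => h ξ * (1 - lam * Real.exp (-(∫ t in (0:ℝ)..ξ, h t))))
        (fun t => g t * (1 - lam * Real.exp (-(∫ s in (0:ℝ)..t, h s)))
          + h t * (lam * h t * Real.exp (-(∫ s in (0:ℝ)..t, h s))))
      ≤ 2 * (2 + (1 / Real.sqrt ρ') ^ 3) * (N + lam * VK (Krr ρ ρ') N) := by
  have hρ' : 0 < ρ' := hρ.trans hρρ'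
  set s := 1 / Real.sqrt ρ' with hs
  have hs0 : 0 ≤ s := by positivity
  set M := Real.exp (Krr ρ ρ' * N) with hM
  have hM1 : 1 ≤ M := Real.one_le_exp (mul_nonneg (krr_nonneg _ _) hN)
  have hE : ∀ t, 0 ≤ t → Real.exp (-(∫ s in (0:ℝ)..t, h s)) ≤ M := fun t ht =>
    Real.exp_le_exp.mpr (fil_I_exp hρ hρρ' hN hm hl hb ht)
  have hW : ∀ t, 0 ≤ t → |1 - lam * Real.exp (-(∫ s in (0:ℝ)..t, h s))| ≤ 1 + lam * M := by
    intro t ht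
    have h1 := mul_le_mul_of_nonneg_left (hE t ht) hlam.le
    have h2 := mul_pos hlam (Real.exp_pos (-(∫ s in (0:ℝ)..t, h s)))
    rw [abs_le]; constructor <;> linarith
  have hdec : ∀ t, 0 ≤ t → h t ^ 2 ≤ N ^ 2 * s ^ 2 * Real.exp (-ρ' * t) := by
    intro t ht
    have h1 := pow_le_pow_left₀ (abs_nonneg _) (fil_decay hρ' hN hm hl hb ht) 2
    have e : Real.exp (-ρ' * t) = Real.exp (-(ρ' / 2) * t) ^ 2 := by
      rw [← Real.exp_nat_mul]; congr 1; push_cast; ring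
    rw [sq_abs] at h1
    rw [e]
    refine h1.trans (le_of_eq (by ring))
  have hcont := fil_continuous hρ' hm
  have hIc := fil_I_cont hcont
  have key := fil_key hρ hρρ' (u := g) (v := g)
    (h := fun ξ => h ξ * (1 - lam * Real.exp (-(∫ t in (0:ℝ)..ξ, h t))))
    (G := fun t => g t * (1 - lam * Real.exp (-(∫ s in (0:ℝ)..t, h s)))
          + h t * (lam * h t * Real.exp (-(∫ s in (0:ℝ)..t, h s))))
    (U := N) (V := N) (a := 1 + lam * M) (b := 0) (c := lam * M * (N ^ 2 * s ^ 2))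
    (d := N * (1 + lam)) hN hN (by positivity) le_rfl (by positivity) (by positivity)
    hm.2.2 (fil_int_le_s15 hN hb) hm.2.2 (fil_int_le_s15 hN hb) ?_ ?_
  · refine ⟨⟨?_, fun x hx => fil_prod hρ' hm lam hx, key.1 ?_⟩, ?_, ?_⟩
    rotate_right 2
    · have hz : Tendsto (fun ξ => |h ξ| * (1 + lam * M)) atTop (nhds 0) := by
        have := hl.abs.mul_const (1 + lam * M)
        simpa using this
      refine squeeze_zero_norm' ?_ hz
      filter_upwards [eventually_ge_atTop 0] with t ht
      rw [Real.norm_eq_abs, abs_mul]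
      gcongr
      exact hW t ht
    · refine key.2.trans ?_
      unfold VK
      rw [← hM]
      have p1 : 0 ≤ lam * N * (M - 1) := by
        have : 0 ≤ M - 1 := by linarith
        positivity
      have p2 : 0 ≤ lam * M * N := by positivity
      have p3 : 0 ≤ s ^ 3 * N := by positivity
      have p4 : 0 ≤ s ^ 3 * (lam * M * N) := by positivity
      have p5 : 0 ≤ lam * M * N ^ 2 := by positivity
      nlinarith
    all_goals
      have m1 : AEMeasurable h (volume.restrict (Ici (0:ℝ))) := hcont.aemeasurable measurableSet_Ici
      have m2 : AEMeasurable (fun t => ∫ s in (0:ℝ)..t, h s) (volume.restrict (Ici (0:ℝ))) :=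
        hIc.aemeasurable measurableSet_Ici
      have m3 := hm.1
      have m4 : AEMeasurable (fun t => Real.exp (-(∫ s in (0:ℝ)..t, h s))) (volume.restrict (Ici (0:ℝ))) :=
        m2.neg.exp
      exact (m3.mul ((m4.const_mul lam).const_sub 1)).add (m1.mul ((m1.const_mul lam).mul m4))
  · intro t ht
    have e1 := hE t ht
    have e0 := Real.exp_pos (-(∫ s in (0:ℝ)..t, h s))
    have e2 := hW t ht
    have e3 := hdec t ht
    generalize Real.exp (-(∫ s in (0:ℝ)..t, h s)) = E at *
    calc |g t * (1 - lam * E) + h t * (lam * h t * E)|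
        ≤ |g t * (1 - lam * E)| + |h t * (lam * h t * E)| := abs_add_le _ _
      _ = |1 - lam * E| * |g t| + lam * E * h t ^ 2 := by
        rw [abs_mul, show h t * (lam * h t * E) = lam * E * h t ^ 2 by ring,
          abs_of_nonneg (show 0 ≤ lam * E * h t ^ 2 by positivity)]; ring
      _ ≤ (1 + lam * M) * |g t| + lam * M * (N ^ 2 * s ^ 2 * Real.exp (-ρ' * t)) := by gcongr
      _ = _ := by ring
  · have := fil_zero_le hN hb
    simp only [intervalIntegral.integral_same, neg_zero, Real.exp_zero, mul_one, abs_mul]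
    have h2 : |1 - lam| ≤ 1 + lam := by rw [abs_le]; constructor <;> linarith
    gcongr

open Set in
lemma fil_lip {ρ ρ' N D lam : ℝ} (hρ : 0 < ρ) (hρρ' : ρ < ρ') (hN : 0 ≤ N) (hD : 0 ≤ D)
    (hlam : 0 < lam) {h₁ g₁ h₂ g₂ : ℝ → ℝ}
    (hm₁ : MemFil ρ' h₁ g₁) (hl₁ : Tendsto h₁ atTop (nhds 0)) (hb₁ : filNorm ρ' h₁ g₁ ≤ N)
    (hm₂ : MemFil ρ' h₂ g₂) (hl₂ : Tendsto h₂ atTop (nhds 0)) (hb₂ : filNorm ρ' h₂ g₂ ≤ N)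
    (hd : filNorm ρ' (fun t => h₁ t - h₂ t) (fun t => g₁ t - g₂ t) ≤ D) :
    filNorm ρ
      (fun ξ => h₁ ξ * (1 - lam * Real.exp (-(∫ t in (0:ℝ)..ξ, h₁ t)))
        - h₂ ξ * (1 - lam * Real.exp (-(∫ t in (0:ℝ)..ξ, h₂ t))))
      (fun t => (g₁ t * (1 - lam * Real.exp (-(∫ s in (0:ℝ)..t, h₁ s)))
          + h₁ t * (lam * h₁ t * Real.exp (-(∫ s in (0:ℝ)..t, h₁ s))))
        - (g₂ t * (1 - lam * Real.exp (-(∫ s in (0:ℝ)..t, h₂ s)))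
          + h₂ t * (lam * h₂ t * Real.exp (-(∫ s in (0:ℝ)..t, h₂ s)))))
      ≤ 2 * (2 + 2 * Krr ρ ρ' + 2 * (1 / Real.sqrt ρ') ^ 3 + Krr ρ ρ' * (1 / Real.sqrt ρ') ^ 3)
        * D * ((1 + lam) + lam * VK (Krr ρ ρ') N) := by
  have hρ' : 0 < ρ' := hρ.trans hρρ'
  have hκ := krr_nonneg ρ ρ'
  have hc₁ := fil_continuous hρ' hm₁
  have hc₂ := fil_continuous hρ' hm₂
  have ii : ∀ {f : ℝ → ℝ}, IntegrableOn f (Ici (0:ℝ)) → ∀ {t : ℝ}, 0 ≤ t →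
      IntervalIntegrable f volume 0 t := by
    intro f hf t ht
    rw [intervalIntegrable_iff_integrableOn_Ioc_of_le ht]
    exact hf.mono_set fun y hy => hy.1.le
  have hmd : MemFil ρ' (fun t => h₁ t - h₂ t) (fun t => g₁ t - g₂ t) := by
    have hmeas := hm₁.1.sub hm₂.1
    refine ⟨hmeas, fun x hx => ?_, ?_⟩
    · simp only []
      rw [intervalIntegral.integral_sub (ii (fil_integrable_s15 hρ' hm₁) hx)
        (ii (fil_integrable_s15 hρ' hm₂) hx), hm₁.2.1 x hx, hm₂.2.1 x hx]
      ring
    · refine Integrable.mono' ((hm₁.2.2.const_mul 2).add (hm₂.2.2.const_mul 2)) ?_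
        (Eventually.of_forall fun t => ?_)
      · exact ((hmeas.pow_const 2).mul (by fun_prop)).aestronglyMeasurable
      · rw [Real.norm_eq_abs, abs_of_nonneg (by positivity)]
        have := Real.exp_pos (ρ' * t)
        simp only [Pi.add_apply]
        nlinarith [mul_nonneg this.le (sq_nonneg (g₁ t + g₂ t))]
  have hld : Tendsto (fun t => h₁ t - h₂ t) atTop (nhds 0) := by simpa using hl₁.sub hl₂
  have hdecd := fun t (ht : 0 ≤ t) => fil_decay hρ' hD hmd hld hd ht
  have hdec₁ := fun t (ht : 0 ≤ t) => fil_decay hρ' hN hm₁ hl₁ hb₁ ht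
  have hdec₂ := fun t (ht : 0 ≤ t) => fil_decay hρ' hN hm₂ hl₂ hb₂ ht
  set M := Real.exp (Krr ρ ρ' * N) with hM
  have hE₁ : ∀ t, 0 ≤ t → Real.exp (-(∫ s in (0:ℝ)..t, h₁ s)) ≤ M := fun t ht =>
    Real.exp_le_exp.mpr (fil_I_exp hρ hρρ' hN hm₁ hl₁ hb₁ ht)
  have hEd : ∀ t, 0 ≤ t → |Real.exp (-(∫ s in (0:ℝ)..t, h₁ s)) - Real.exp (-(∫ s in (0:ℝ)..t, h₂ s))|
      ≤ M * (Krr ρ ρ' * D) := by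
    intro t ht
    refine (exp_diff_le (fil_I_exp hρ hρρ' hN hm₁ hl₁ hb₁ ht)
      (fil_I_exp hρ hρρ' hN hm₂ hl₂ hb₂ ht)).trans ?_
    gcongr
    have hi₁ : IntervalIntegrable h₁ volume 0 t :=
      (hc₁.mono (by rw [uIcc_of_le ht]; exact Icc_subset_Ici_self)).intervalIntegrable
    have hi₂ : IntervalIntegrable h₂ volume 0 t :=
      (hc₂.mono (by rw [uIcc_of_le ht]; exact Icc_subset_Ici_self)).intervalIntegrable
    have := fil_I_le hρ hρρ' hD hdecd ht
    rw [intervalIntegral.integral_sub hi₁ hi₂] at this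
    rw [show ∀ a b : ℝ, -a - -b = -(a - b) by intros; ring, abs_neg]
    exact this
  set s := 1 / Real.sqrt ρ' with hs
  have hs0 : 0 ≤ s := by positivity
  set κ := Krr ρ ρ' with hκdef
  have key := fil_key hρ hρρ' (u := fun t => g₁ t - g₂ t) (v := g₂)
    (h := fun ξ => h₁ ξ * (1 - lam * Real.exp (-(∫ t in (0:ℝ)..ξ, h₁ t)))
        - h₂ ξ * (1 - lam * Real.exp (-(∫ t in (0:ℝ)..ξ, h₂ t))))
    (G := fun t => (g₁ t * (1 - lam * Real.exp (-(∫ s in (0:ℝ)..t, h₁ s)))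
          + h₁ t * (lam * h₁ t * Real.exp (-(∫ s in (0:ℝ)..t, h₁ s))))
        - (g₂ t * (1 - lam * Real.exp (-(∫ s in (0:ℝ)..t, h₂ s)))
          + h₂ t * (lam * h₂ t * Real.exp (-(∫ s in (0:ℝ)..t, h₂ s)))))
    (U := D) (V := N) (a := 1 + lam * M) (b := lam * (M * (κ * D)))
    (c := lam * M * (2 * N * D * s ^ 2) + lam * (M * (κ * D)) * (N ^ 2 * s ^ 2))
    (d := D * (1 + lam)) hD hN (by positivity) (by positivity) (by positivity) (by positivity)
    hmd.2.2 (fil_int_le_s15 hD hd) hm₂.2.2 (fil_int_le_s15 hN hb₂) ?_ ?_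
  · refine key.2.trans ?_
    unfold VK
    rw [← hM]
    have hM2 : M ≤ 1 + κ * N * M := by
      have h1 := Real.add_one_le_exp (-(κ * N))
      have h2 : Real.exp (-(κ * N)) * M = 1 := by rw [hM, ← Real.exp_add]; simp
      have h3 : 0 < M := Real.exp_pos _
      nlinarith
    have hM0 : 0 < M := Real.exp_pos _
    have q : D * (1 + lam) + (1 + lam * M) * D + lam * (M * (κ * D)) * N
        + (lam * M * (2 * N * D * s ^ 2) + lam * (M * (κ * D)) * (N ^ 2 * s ^ 2)) * s
        ≤ (2 + 2 * κ + 2 * s ^ 3 + κ * s ^ 3) * D * (1 + lam + lam * (N * (1 + N) * M)) := by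
      have q1 : lam * D * M ≤ lam * D * (1 + κ * N * M) := by gcongr
      have r1 : 0 ≤ (2 * κ + 2 * s ^ 3 + κ * s ^ 3) * D * (1 + lam) := by positivity
      have r2 : 0 ≤ (2 + 2 * s ^ 3 + κ * s ^ 3 - 2 * s ^ 3) * D * (lam * N * M) := by
        have : 0 ≤ 2 + 2 * s ^ 3 + κ * s ^ 3 - 2 * s ^ 3 := by
          have : 0 ≤ κ * s ^ 3 := by positivity
          linarith
        positivity
      have r3 : 0 ≤ (2 + 2 * κ + 2 * s ^ 3) * D * (lam * N ^ 2 * M) := by positivity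
      linarith
    linarith
  · intro t ht
    have e1 := hE₁ t ht
    have e0 := Real.exp_pos (-(∫ s in (0:ℝ)..t, h₁ s))
    have e2 := hEd t ht
    have d0 := hdecd t ht
    have d1 := hdec₁ t ht
    have d2 := hdec₂ t ht
    have e : Real.exp (-ρ' * t) = Real.exp (-(ρ' / 2) * t) ^ 2 := by
      rw [← Real.exp_nat_mul]; congr 1; push_cast; ring
    rw [e]
    have hw0 := Real.exp_pos (-(ρ' / 2) * t)
    beta_reduce at d0 ⊢
    generalize Real.exp (-(ρ' / 2) * t) = w at *
    generalize Real.exp (-(∫ s in (0:ℝ)..t, h₁ s)) = E₁ at *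
    generalize Real.exp (-(∫ s in (0:ℝ)..t, h₂ s)) = E₂ at *
    have f1 : |1 - lam * E₁| ≤ 1 + lam * M := by
      have h1 := mul_le_mul_of_nonneg_left e1 hlam.le
      have h2 := mul_pos hlam e0
      rw [abs_le]; constructor <;> linarith
    have f2 : |h₁ t + h₂ t| ≤ N * s * w + N * s * w :=
      (abs_add_le _ _).trans (add_le_add d1 d2)
    calc |g₁ t * (1 - lam * E₁) + h₁ t * (lam * h₁ t * E₁) - (g₂ t * (1 - lam * E₂) + h₂ t * (lam * h₂ t * E₂))|
        = |(1 - lam * E₁) * (g₁ t - g₂ t) + (-(lam * (E₁ - E₂) * g₂ t))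
          + lam * E₁ * ((h₁ t - h₂ t) * (h₁ t + h₂ t)) + lam * (E₁ - E₂) * (h₂ t) ^ 2| := by
          congr 1; ring
      _ ≤ |(1 - lam * E₁) * (g₁ t - g₂ t)| + |-(lam * (E₁ - E₂) * g₂ t)|
          + |lam * E₁ * ((h₁ t - h₂ t) * (h₁ t + h₂ t))| + |lam * (E₁ - E₂) * (h₂ t) ^ 2| :=
          (abs_add_le _ _).trans (add_le_add_left ((abs_add_le _ _).trans
            (add_le_add_left (abs_add_le _ _) _)) _)
      _ = |1 - lam * E₁| * |g₁ t - g₂ t| + lam * |E₁ - E₂| * |g₂ t|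
          + lam * E₁ * (|h₁ t - h₂ t| * |h₁ t + h₂ t|) + lam * |E₁ - E₂| * |h₂ t| ^ 2 := by
          simp only [abs_neg, abs_mul, abs_pow, abs_of_pos hlam, abs_of_pos e0]
      _ ≤ (1 + lam * M) * |g₁ t - g₂ t| + lam * (M * (κ * D)) * |g₂ t|
          + lam * M * ((D * s * w) * (N * s * w + N * s * w))
          + lam * (M * (κ * D)) * (N * s * w) ^ 2 := by gcongr
      _ = _ := by ring
  · have := fil_zero_le hD hd
    simp only [intervalIntegral.integral_same, neg_zero, Real.exp_zero, mul_one]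
    rw [← sub_mul, abs_mul]
    have h2 : |1 - lam| ≤ 1 + lam := by rw [abs_le]; constructor <;> linarith
    gcongr

/-- for `γ : X → H⁰_{ρ'}` locally Lipschitz with Lipschitz function `L_γ`
and boundedness function `B_γ`, the maps `α_λ(x) = γ(x)·(1 − λ exp(−𝓘γ(x)))`, `λ > 0`,
take values in `H⁰_ρ`, are locally Lipschitz, and satisfy explicit estimates with a
constant `K > 0` independent of `λ`. -/
theorem filipovic_alpha_lambda (ρ ρ' : ℝ) (hρ : 0 < ρ) (hρρ' : ρ < ρ')
    {X : Type*} [NormedAddCommGroup X] [NormedSpace ℝ X]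
    (γ dγ : X → ℝ → ℝ)
    (hmem : ∀ x : X, MemFil ρ' (γ x) (dγ x))
    (hlim : ∀ x : X, Tendsto (γ x) atTop (nhds 0))
    (Lγ Bγ : ℝ → ℝ)
    (hLmono : MonotoneOn Lγ (Set.Ici 0)) (hLnn : ∀ r : ℝ, 0 ≤ r → 0 ≤ Lγ r)
    (hBmono : MonotoneOn Bγ (Set.Ici 0)) (hBnn : ∀ r : ℝ, 0 ≤ r → 0 ≤ Bγ r)
    (hLip : ∀ r : ℝ, 0 ≤ r → ∀ x₁ x₂ : X, ‖x₁‖ ≤ r → ‖x₂‖ ≤ r →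
      filNorm ρ' (fun t => γ x₁ t - γ x₂ t) (fun t => dγ x₁ t - dγ x₂ t)
        ≤ Lγ r * ‖x₁ - x₂‖)
    (hBd : ∀ r : ℝ, 0 ≤ r → ∀ x : X, ‖x‖ ≤ r → filNorm ρ' (γ x) (dγ x) ≤ Bγ r) :
    (∀ lam : ℝ, 0 < lam → ∀ x : X,
      MemFil ρ
        (fun ξ => γ x ξ * (1 - lam * Real.exp (-(∫ t in (0:ℝ)..ξ, γ x t))))
        (fun t => dγ x t * (1 - lam * Real.exp (-(∫ s in (0:ℝ)..t, γ x s)))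
          + γ x t * (lam * γ x t * Real.exp (-(∫ s in (0:ℝ)..t, γ x s)))) ∧
      Tendsto (fun ξ => γ x ξ * (1 - lam * Real.exp (-(∫ t in (0:ℝ)..ξ, γ x t))))
        atTop (nhds 0)) ∧
    ∃ K : ℝ, 0 < K ∧ ∀ lam : ℝ, 0 < lam → ∀ r : ℝ, 0 ≤ r →
      (∀ x₁ x₂ : X, ‖x₁‖ ≤ r → ‖x₂‖ ≤ r →
        filNorm ρ
          (fun ξ => γ x₁ ξ * (1 - lam * Real.exp (-(∫ t in (0:ℝ)..ξ, γ x₁ t)))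
            - γ x₂ ξ * (1 - lam * Real.exp (-(∫ t in (0:ℝ)..ξ, γ x₂ t))))
          (fun t => (dγ x₁ t * (1 - lam * Real.exp (-(∫ s in (0:ℝ)..t, γ x₁ s)))
              + γ x₁ t * (lam * γ x₁ t * Real.exp (-(∫ s in (0:ℝ)..t, γ x₁ s))))
            - (dγ x₂ t * (1 - lam * Real.exp (-(∫ s in (0:ℝ)..t, γ x₂ s)))
              + γ x₂ t * (lam * γ x₂ t * Real.exp (-(∫ s in (0:ℝ)..t, γ x₂ s)))))
          ≤ K * Lγ r * ((1 + lam) + lam * VK (Krr ρ ρ') (Bγ r)) * ‖x₁ - x₂‖) ∧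
      (∀ x : X, ‖x‖ ≤ r →
        filNorm ρ
          (fun ξ => γ x ξ * (1 - lam * Real.exp (-(∫ t in (0:ℝ)..ξ, γ x t))))
          (fun t => dγ x t * (1 - lam * Real.exp (-(∫ s in (0:ℝ)..t, γ x s)))
            + γ x t * (lam * γ x t * Real.exp (-(∫ s in (0:ℝ)..t, γ x s))))
          ≤ K * (Bγ r + lam * VK (Krr ρ ρ') (Bγ r))) := by
  refine ⟨fun lam hlam x => ?_, ?_⟩
  · have h0 : 0 ≤ filNorm ρ' (γ x) (dγ x) := Real.sqrt_nonneg _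
    have := fil_bound hρ hρρ' h0 hlam (hmem x) (hlim x) le_rfl
    exact ⟨this.1, this.2.1⟩
  · have hκ := krr_nonneg ρ ρ'
    have hs0 : 0 ≤ 1 / Real.sqrt ρ' := by positivity
    refine ⟨2 * (2 + 2 * Krr ρ ρ' + 2 * (1 / Real.sqrt ρ') ^ 3 + Krr ρ ρ' * (1 / Real.sqrt ρ') ^ 3),
      by positivity, fun lam hlam r hr => ⟨fun x₁ x₂ h₁ h₂ => ?_, fun x hx => ?_⟩⟩
    · have := fil_lip hρ hρρ' (hBnn r hr) (mul_nonneg (hLnn r hr) (norm_nonneg (x₁ - x₂))) hlam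
        (hmem x₁) (hlim x₁) (hBd r hr x₁ h₁) (hmem x₂) (hlim x₂) (hBd r hr x₂ h₂)
        (hLip r hr x₁ x₂ h₁ h₂)
      refine this.trans (le_of_eq (by ring))
    · refine (fil_bound hρ hρρ' (hBnn r hr) hlam (hmem x) (hlim x) (hBd r hr x hx)).2.2.trans ?_
      have hB := hBnn r hr
      have hV : 0 ≤ VK (Krr ρ ρ') (Bγ r) := by unfold VK; positivity
      refine mul_le_mul_of_nonneg_right ?_ (by positivity)
      have : 0 ≤ Krr ρ ρ' * (1 / Real.sqrt ρ') ^ 3 := by positivity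
      have : 0 ≤ (1 / Real.sqrt ρ') ^ 3 := by positivity
      linarith
end
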